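/- arXiv:1306.3838 — 11 statements merged into one kernel-verified Lean document; each statement's English description precedes it below -/
import Mathlib

section
/- Let A be a ring with a set of local units E, let G be an abelian group, and let α be a partial action of G on A such that each ideal D_t has local units and such that the partial skew group ring R = A ⋆_α G is associative. Assume A is G-simple. Then for every nonzero r ∈ R and every e ∈ E there exists r' ∈ RrR (the set of finite sums of products u·r·v with u, v ∈ R) such that P_0(r') = e and #supp(r') ≤ #supp(r). -/
/-- A partial action of a group `G` on a non-unital ring `A` by two-sided ideals
`D t` and ring isomorphisms `α t : D t⁻¹ → D t` (encoded as globally defined maps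
whose behaviour only matters on the relevant ideal). -/
structure RingPartialAction (G : Type*) [Group G] (A : Type*) [NonUnitalRing A] where
  /-- The ideals `D t`, given as additive subgroups … -/
  D : G → AddSubgroup A
  /-- … which are two-sided ideals. -/
  idl_left : ∀ t (a : A), ∀ x ∈ D t, a * x ∈ D t
  idl_right : ∀ t, ∀ x ∈ D t, ∀ a : A, x * a ∈ D t
  /-- The maps `α t`, only their values on `D t⁻¹` matter. -/
  α : G → A → A
  α_mem : ∀ t, ∀ a ∈ D t⁻¹, α t a ∈ D t
  α_add : ∀ t, ∀ a ∈ D t⁻¹, ∀ b ∈ D t⁻¹, α t (a + b) = α t a + α t b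
  α_mul : ∀ t, ∀ a ∈ D t⁻¹, ∀ b ∈ D t⁻¹, α t (a * b) = α t a * α t b
  D_one : D 1 = ⊤
  α_one : ∀ a, α 1 a = a
  α_left_inv : ∀ t, ∀ a ∈ D t⁻¹, α t⁻¹ (α t a) = a
  α_mapsTo : ∀ t s, ∀ a ∈ D t⁻¹, a ∈ D s → α t a ∈ D (t * s)
  α_surjOn : ∀ t s, ∀ b ∈ D t, b ∈ D (t * s) → ∃ a, a ∈ D t⁻¹ ∧ a ∈ D s ∧ α t a = b
  α_comp : ∀ t s, ∀ a ∈ D s⁻¹, a ∈ D (s⁻¹ * t⁻¹) → α t (α s a) = α (t * s) a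

namespace RingPartialAction

variable {G : Type*} [Group G] {A : Type*} [NonUnitalRing A]

/-- The underlying additive group of the partial skew group ring `A ⋆_α G`:
finitely supported dependent functions `r` with `r t ∈ D t`,
`r = Σ_t r(t) δ_t`. -/
abbrev SkewRing (pa : RingPartialAction G A) : Type _ := Π₀ t : G, ↥(pa.D t)

/-- The element `a δ_t`. -/
noncomputable def delta [DecidableEq G] (pa : RingPartialAction G A) (t : G) (a : A)
    (ha : a ∈ pa.D t) : pa.SkewRing := DFinsupp.single t ⟨a, ha⟩

/-- `P g r`, the `g`-th coordinate projection of `r`. -/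
def P (pa : RingPartialAction G A) (g : G) (r : pa.SkewRing) : A := ↑(r g)

/-- The support of `r = Σ_t r(t) δ_t`. -/
def supp (pa : RingPartialAction G A) (r : pa.SkewRing) : Set G := {t : G | r t ≠ 0}

/-- The element `e δ_0` for `e ∈ A = D 1`. -/
noncomputable def unitDelta [DecidableEq G] (pa : RingPartialAction G A) (e : A) :
    pa.SkewRing :=
  pa.delta 1 e (by rw [pa.D_one]; exact AddSubgroup.mem_top e)

end RingPartialAction

/-- The multiplication of the partial skew group ring `A ⋆_α G`, which is *assumed*
to exist, to be biadditive, to be associative and to satisfy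
`(a δ_t)(b δ_s) = α_t(α_{t⁻¹}(a) b) δ_{ts}`. -/
structure SkewMul {G : Type*} [Group G] {A : Type*} [NonUnitalRing A] [DecidableEq G]
    (pa : RingPartialAction G A) where
  mul : pa.SkewRing → pa.SkewRing → pa.SkewRing
  left_distrib : ∀ x y z, mul x (y + z) = mul x y + mul x z
  right_distrib : ∀ x y z, mul (x + y) z = mul x z + mul y z
  mul_single : ∀ (t s : G) (a : A) (ha : a ∈ pa.D t) (b : A) (hb : b ∈ pa.D s) (g : G),
    pa.P g (mul (pa.delta t a ha) (pa.delta s b hb)) =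
      if g = t * s then pa.α t (pa.α t⁻¹ a * b) else 0
  assoc : ∀ x y z, mul (mul x y) z = mul x (mul y z)

section LocalUnits

variable (A : Type*) [NonUnitalRing A]

/-- `A` is a ring with local units. -/
def HasLocalUnits : Prop :=
  ∀ F : Finset A, ∃ e : A, e * e = e ∧ ∀ a ∈ F, e * a = a ∧ a * e = a

variable {A}

/-- `E` is a set of local units for `A`. -/
def IsLocalUnitSet (E : Set A) : Prop :=
  (∀ e ∈ E, e * e = e) ∧ ∀ F : Finset A, ∃ e ∈ E, ∀ a ∈ F, e * a = a ∧ a * e = a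

/-- The (non-unital, non-necessarily full) subring `S ⊆ A` has local units. -/
def SubsetHasLocalUnits (S : Set A) : Prop :=
  ∀ F : Finset A, (∀ a ∈ F, a ∈ S) →
    ∃ e ∈ S, e * e = e ∧ ∀ a ∈ F, e * a = a ∧ a * e = a

/-- `I` is a two-sided ideal of `A` (as a set). -/
def IsRingIdeal (I : Set A) : Prop :=
  (0 : A) ∈ I ∧ (∀ a ∈ I, ∀ b ∈ I, a + b ∈ I) ∧ (∀ a ∈ I, -a ∈ I) ∧
    (∀ a ∈ I, ∀ b : A, a * b ∈ I ∧ b * a ∈ I)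

end LocalUnits

section Invariance

variable {G : Type*} [Group G] {A : Type*} [NonUnitalRing A]

/-- `I ⊆ A` is `G`-invariant: `α t (I ∩ D t⁻¹) ⊆ I ∩ D t`. -/
def GInvariant (pa : RingPartialAction G A) (I : Set A) : Prop :=
  ∀ t : G, ∀ a ∈ I, a ∈ pa.D t⁻¹ → pa.α t a ∈ I ∧ pa.α t a ∈ pa.D t

/-- `A` is `G`-simple: the only `G`-invariant ideals of `A` are `{0}` and `A`. -/
def GSimple (pa : RingPartialAction G A) : Prop :=
  ∀ I : Set A, IsRingIdeal I → GInvariant pa I → I = {0} ∨ I = Set.univ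

variable [DecidableEq G]

/-- `J` is a two-sided ideal of the partial skew group ring. -/
def IsSkewIdeal {pa : RingPartialAction G A} (S : SkewMul pa) (J : Set pa.SkewRing) : Prop :=
  (0 : pa.SkewRing) ∈ J ∧ (∀ x ∈ J, ∀ y ∈ J, x + y ∈ J) ∧ (∀ x ∈ J, -x ∈ J) ∧
    (∀ x ∈ J, ∀ y : pa.SkewRing, S.mul x y ∈ J ∧ S.mul y x ∈ J)

/-- The corner `x R x` of the partial skew group ring. -/
def corner {pa : RingPartialAction G A} (S : SkewMul pa) (x : pa.SkewRing) :
    Set pa.SkewRing := {y | ∃ z, y = S.mul x (S.mul z x)}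

/-- `C_e`: the center of the corner `eδ_0 R eδ_0`. -/
def Ce {pa : RingPartialAction G A} (S : SkewMul pa) (e : A) : Set pa.SkewRing :=
  {x ∈ corner S (pa.unitDelta e) |
    ∀ y ∈ corner S (pa.unitDelta e), S.mul x y = S.mul y x}

end Invariance

section Helpers

variable {G : Type*} [Group G] [DecidableEq G] {A : Type*} [NonUnitalRing A]

theorem hp_alpha_zero (pa : RingPartialAction G A) (t : G) : pa.α t 0 = 0 := by
  have h := pa.α_add t 0 (zero_mem _) 0 (zero_mem _)
  simpa using h

theorem hp_mul_zero {pa : RingPartialAction G A} (S : SkewMul pa) (x : pa.SkewRing) :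
    S.mul x 0 = 0 := by
  have h := S.left_distrib x 0 0
  simpa using h

theorem hp_zero_mul {pa : RingPartialAction G A} (S : SkewMul pa) (x : pa.SkewRing) :
    S.mul 0 x = 0 := by
  have h := S.right_distrib 0 0 x
  simpa using h

theorem hp_P_add (pa : RingPartialAction G A) (g : G) (x y : pa.SkewRing) :
    pa.P g (x + y) = pa.P g x + pa.P g y := by
  simp [RingPartialAction.P]

theorem hp_P_zero (pa : RingPartialAction G A) (g : G) : pa.P g (0 : pa.SkewRing) = 0 := by
  simp [RingPartialAction.P]

theorem hp_P_neg (pa : RingPartialAction G A) (g : G) (x : pa.SkewRing) :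
    pa.P g (-x) = - pa.P g x := by
  simp [RingPartialAction.P]

theorem hp_P_mem (pa : RingPartialAction G A) (g : G) (x : pa.SkewRing) :
    pa.P g x ∈ pa.D g := (x g).2

theorem hp_P_delta (pa : RingPartialAction G A) (t g : G) (a : A) (ha : a ∈ pa.D t) :
    pa.P g (pa.delta t a ha) = if g = t then a else 0 := by
  unfold RingPartialAction.P RingPartialAction.delta
  by_cases h : g = t
  · subst h; simp
  · simp [h, DFinsupp.single_apply, Ne.symm h]

theorem hp_inv_mem (pa : RingPartialAction G A) (t : G) (a : A) (ha : a ∈ pa.D t) :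
    pa.α t⁻¹ a ∈ pa.D t⁻¹ := by
  apply pa.α_mem; simpa using ha

theorem hp_right_inv (pa : RingPartialAction G A) (t : G) (a : A) (ha : a ∈ pa.D t) :
    pa.α t (pa.α t⁻¹ a) = a := by
  have := pa.α_left_inv t⁻¹ a (by simpa using ha)
  simpa using this

theorem hp_left_formula {pa : RingPartialAction G A} (S : SkewMul pa) (t : G) (a : A)
    (ha : a ∈ pa.D t) (x : pa.SkewRing) (g : G) :
    pa.P g (S.mul (pa.delta t a ha) x) = pa.α t (pa.α t⁻¹ a * pa.P (t⁻¹ * g) x) := by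
  have hm := hp_inv_mem pa t a ha
  induction x using DFinsupp.induction with
  | h0 => simp [hp_mul_zero, hp_P_zero, hp_alpha_zero]
  | ha i b f _ _ ih =>
    have hs : (DFinsupp.single i b : pa.SkewRing) = pa.delta i b.1 b.2 := rfl
    rw [hs, S.left_distrib, hp_P_add, ih, hp_P_add, mul_add,
      pa.α_add t _ (pa.idl_right _ _ hm _) _ (pa.idl_right _ _ hm _), S.mul_single, hp_P_delta]
    congr 1
    by_cases h : g = t * i
    · simp [h]
    · have : ¬ t⁻¹ * g = i := fun h' => h (by rw [← h']; group)
      simp [h, this, hp_alpha_zero]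

theorem hp_right_formula {pa : RingPartialAction G A} (S : SkewMul pa) (s : G) (b : A)
    (hb : b ∈ pa.D s) (x : pa.SkewRing) (g : G) :
    pa.P g (S.mul x (pa.delta s b hb)) =
      pa.α (g * s⁻¹) (pa.α (g * s⁻¹)⁻¹ (pa.P (g * s⁻¹) x) * b) := by
  induction x using DFinsupp.induction with
  | h0 => simp [hp_zero_mul, hp_P_zero, hp_alpha_zero, -mul_inv_rev]
  | ha i c f _ _ ih =>
    have hs : (DFinsupp.single i c : pa.SkewRing) = pa.delta i c.1 c.2 := rfl
    have h1 := hp_P_mem pa (g * s⁻¹) (pa.delta i c.1 c.2)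
    have h2 := hp_P_mem pa (g * s⁻¹) f
    rw [hs, S.right_distrib, hp_P_add, ih, hp_P_add,
      pa.α_add (g * s⁻¹)⁻¹ _ (by simpa only [inv_inv] using h1) _
        (by simpa only [inv_inv] using h2), add_mul,
      pa.α_add (g * s⁻¹) _ (pa.idl_right _ _ (hp_inv_mem pa _ _ h1) _) _
        (pa.idl_right _ _ (hp_inv_mem pa _ _ h2) _), S.mul_single, hp_P_delta]
    congr 1
    by_cases h : g = i * s
    · have : g * s⁻¹ = i := by rw [h]; group
      rw [this]; simp [h]
    · have : ¬ g * s⁻¹ = i := fun h' => h (by rw [← h']; group)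
      simp [h, this, hp_alpha_zero, -mul_inv_rev]

/-- the additive span `RrR` -/
def hpI {pa : RingPartialAction G A} (S : SkewMul pa) (r : pa.SkewRing) :
    AddSubmonoid pa.SkewRing :=
  AddSubmonoid.closure {x : pa.SkewRing | ∃ u v, x = S.mul u (S.mul r v)}

theorem hp_I_left {pa : RingPartialAction G A} (S : SkewMul pa) (r x y : pa.SkewRing)
    (hx : x ∈ hpI S r) : S.mul y x ∈ hpI S r := by
  unfold hpI at hx
  induction hx using AddSubmonoid.closure_induction with
  | mem x hx =>
    obtain ⟨u, v, rfl⟩ := hx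
    exact AddSubmonoid.subset_closure ⟨S.mul y u, v, (S.assoc _ _ _).symm⟩
  | zero => rw [hp_mul_zero]; exact zero_mem _
  | add a b _ _ ha hb => rw [S.left_distrib]; exact add_mem ha hb

theorem hp_I_right {pa : RingPartialAction G A} (S : SkewMul pa) (r x y : pa.SkewRing)
    (hx : x ∈ hpI S r) : S.mul x y ∈ hpI S r := by
  unfold hpI at hx
  induction hx using AddSubmonoid.closure_induction with
  | mem x hx =>
    obtain ⟨u, v, rfl⟩ := hx
    exact AddSubmonoid.subset_closure ⟨u, S.mul v y, by rw [S.assoc, S.assoc]⟩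
  | zero => rw [hp_zero_mul]; exact zero_mem _
  | add a b _ _ ha hb => rw [S.right_distrib]; exact add_mem ha hb

theorem hp_I_neg {pa : RingPartialAction G A} (S : SkewMul pa) (r x : pa.SkewRing)
    (hx : x ∈ hpI S r) : -x ∈ hpI S r := by
  unfold hpI at hx
  induction hx using AddSubmonoid.closure_induction with
  | mem x hx =>
    obtain ⟨u, v, rfl⟩ := hx
    refine AddSubmonoid.subset_closure ⟨-u, v, ?_⟩
    rw [neg_eq_iff_add_eq_zero, ← S.right_distrib, add_neg_cancel, hp_zero_mul]
  | zero => rw [neg_zero]; exact zero_mem _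
  | add a b _ _ ha hb => rw [neg_add]; exact add_mem ha hb

end Helpers

theorem lemma_one_of_simplicity_paper
    {G : Type*} [CommGroup G] [DecidableEq G] {A : Type*} [NonUnitalRing A]
    (pa : RingPartialAction G A) (S : SkewMul pa)
    (E : Set A) (hE : IsLocalUnitSet E)
    (hD : ∀ t : G, SubsetHasLocalUnits (pa.D t : Set A))
    (hsimple : GSimple pa) :
    ∀ r : pa.SkewRing, r ≠ 0 → ∀ e ∈ E,
      ∃ r' ∈ AddSubmonoid.closure {x : pa.SkewRing | ∃ u v, x = S.mul u (S.mul r v)},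
        pa.P 1 r' = e ∧ (pa.supp r').ncard ≤ (pa.supp r).ncard := by
  intro r hr e _
  have hone : ∀ a : A, a ∈ pa.D 1 := fun a => by rw [pa.D_one]; exact AddSubgroup.mem_top a
  obtain ⟨t, ht⟩ : ∃ t, r t ≠ 0 := by
    by_contra h
    push Not at h
    exact hr (DFinsupp.ext h)
  have hcoe : ∀ (x : pa.SkewRing) (g : G), x g = 0 ↔ pa.P g x = 0 := fun x g => by
    simp [RingPartialAction.P]
  have ha : pa.P t r ≠ 0 := fun h => ht ((hcoe r t).2 h)
  -- the ideal
  let J : Set A := {c | ∃ x ∈ hpI S r, (∀ g, pa.P (g * t) r = 0 → pa.P g x = 0) ∧ pa.P 1 x = c}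
  have hJ : IsRingIdeal J := by
    refine ⟨⟨0, zero_mem _, fun g _ => hp_P_zero _ _, hp_P_zero _ _⟩, ?_, ?_, ?_⟩
    · rintro _ ⟨x, hx, hx', rfl⟩ _ ⟨y, hy, hy', rfl⟩
      exact ⟨x + y, add_mem hx hy, fun g hg => by rw [hp_P_add, hx' g hg, hy' g hg, add_zero],
        hp_P_add _ _ _ _⟩
    · rintro _ ⟨x, hx, hx', rfl⟩
      exact ⟨-x, hp_I_neg _ _ _ hx, fun g hg => by rw [hp_P_neg, hx' g hg, neg_zero],
        hp_P_neg _ _ _⟩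
    · rintro _ ⟨x, hx, hx', rfl⟩ b
      constructor
      · refine ⟨S.mul x (pa.delta 1 b (hone b)), hp_I_right _ _ _ _ hx, fun g hg => ?_, ?_⟩
        · rw [hp_right_formula, inv_one, mul_one, hx' g hg, hp_alpha_zero, zero_mul,
            hp_alpha_zero]
        · rw [hp_right_formula]; simp [pa.α_one]
      · refine ⟨S.mul (pa.delta 1 b (hone b)) x, hp_I_left _ _ _ _ hx, fun g hg => ?_, ?_⟩
        · rw [hp_left_formula, inv_one, one_mul, hx' g hg, mul_zero, hp_alpha_zero]
        · rw [hp_left_formula]; simp [pa.α_one]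
  have hinv : GInvariant pa J := by
    rintro s _ ⟨x, hx, hx', rfl⟩ hc
    refine ⟨?_, pa.α_mem _ _ hc⟩
    obtain ⟨w, hw, -, hw2⟩ := hD s⁻¹ {pa.P 1 x} (by simpa using hc)
    have hw' : w ∈ pa.D s⁻¹ := hw
    obtain ⟨hl, hr'⟩ := hw2 _ (Finset.mem_singleton_self _)
    refine ⟨S.mul (S.mul (pa.delta s (pa.α s w) (pa.α_mem _ _ hw')) x) (pa.delta s⁻¹ w hw'),
      hp_I_right _ _ _ _ (hp_I_left _ _ _ _ hx), fun g hg => ?_, ?_⟩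
    · rw [hp_right_formula, hp_left_formula]
      have : s⁻¹ * (g * s⁻¹⁻¹) = g := by rw [inv_inv, mul_comm g, inv_mul_cancel_left]
      rw [this, hx' g hg, mul_zero, hp_alpha_zero, hp_alpha_zero, zero_mul, hp_alpha_zero]
    · rw [hp_right_formula, hp_left_formula]
      simp only [inv_inv, one_mul, inv_mul_cancel]
      rw [pa.α_left_inv s w hw', hl, pa.α_left_inv s _ hc, hr']
  have haJ : pa.P t r ∈ J := by
    have hmem := hp_P_mem pa t r
    have hmem' := hp_inv_mem pa t _ hmem
    obtain ⟨w, hw, -, hw2⟩ := hD t⁻¹ {pa.α t⁻¹ (pa.P t r)} (by simpa using hmem')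
    have hw' : w ∈ pa.D t⁻¹ := hw
    obtain ⟨-, hwr⟩ := hw2 _ (Finset.mem_singleton_self _)
    obtain ⟨u, -, hu⟩ := hE.2 {pa.P t r}
    obtain ⟨hul, -⟩ := hu _ (Finset.mem_singleton_self _)
    refine ⟨S.mul (pa.delta 1 u (hone u)) (S.mul r (pa.delta t⁻¹ w hw')),
      AddSubmonoid.subset_closure ⟨_, _, rfl⟩, fun g hg => ?_, ?_⟩
    · rw [hp_left_formula, hp_right_formula]
      simp only [inv_inv, inv_one, one_mul]
      rw [hg, hp_alpha_zero, zero_mul, hp_alpha_zero, mul_zero, hp_alpha_zero]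
    · rw [hp_left_formula, hp_right_formula]
      simp only [inv_inv, inv_one, one_mul, pa.α_one]
      rw [hwr, hp_right_inv pa t _ hmem, hul]
  rcases hsimple J hJ hinv with h | h
  · rw [h] at haJ
    exact absurd haJ ha
  · obtain ⟨x, hx, hx', hxe⟩ : e ∈ J := by rw [h]; trivial
    refine ⟨x, hx, hxe, ?_⟩
    have hfin : (pa.supp r).Finite := by
      have : pa.supp r ⊆ {g | r g ≠ 0} := fun _ h => h
      exact (DFinsupp.finite_support r).subset this
    refine Set.ncard_le_ncard_of_injOn (fun g => g * t) ?_ (fun _ _ _ _ h => mul_right_cancel h)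
      hfin
    intro g hg hg'
    exact hg ((hcoe x g).2 (hx' g ((hcoe r _).1 hg')))
end

section
/- Let A be a ring with a set of local units E, let G be an abelian group, and let α be a partial action of G on A such that each ideal D_t has local units and such that the partial skew group ring R = A ⋆_α G is associative. Then the following are equivalent: (1) R is simple (its only two-sided ideals are {0} and R); (2) A is G-simple and, for every e ∈ E, C_e is a field (i.e., C_e is a commutative unital ring with identity eδ_0 in which every nonzero element is invertible). -/
namespace PSG

variable {G : Type*} [Group G] {A : Type*} [NonUnitalRing A] (pa : RingPartialAction G A)

lemma mem_one (a : A) : a ∈ pa.D 1 := by rw [pa.D_one]; exact AddSubgroup.mem_top a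

lemma alpha_zero (t : G) : pa.α t 0 = 0 := by
  have h := pa.α_add t 0 (zero_mem _) 0 (zero_mem _)
  simpa using h

lemma alpha_inv_mem (t : G) (a : A) (ha : a ∈ pa.D t) : pa.α t⁻¹ a ∈ pa.D t⁻¹ :=
  pa.α_mem t⁻¹ a (by simpa using ha)

lemma alpha_right_inv (t : G) (a : A) (ha : a ∈ pa.D t) : pa.α t (pa.α t⁻¹ a) = a := by
  have h := pa.α_left_inv t⁻¹ a (by simpa using ha)
  simpa using h

lemma P_add (g : G) (x y : pa.SkewRing) : pa.P g (x + y) = pa.P g x + pa.P g y := by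
  simp [RingPartialAction.P]

lemma P_sub (g : G) (x y : pa.SkewRing) : pa.P g (x - y) = pa.P g x - pa.P g y := by
  simp [RingPartialAction.P]

lemma P_neg (g : G) (x : pa.SkewRing) : pa.P g (-x) = - pa.P g x := by
  simp [RingPartialAction.P]

lemma P_zero (g : G) : pa.P g 0 = 0 := by
  simp [RingPartialAction.P]

lemma P_mem (g : G) (x : pa.SkewRing) : pa.P g x ∈ pa.D g := (x g).2

lemma P_ext {x y : pa.SkewRing} (h : ∀ g, pa.P g x = pa.P g y) : x = y :=
  DFinsupp.ext fun g => Subtype.ext (h g)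

variable [DecidableEq G]

lemma P_delta_same (t : G) (a : A) (ha : a ∈ pa.D t) : pa.P t (pa.delta t a ha) = a := by
  simp [RingPartialAction.P, RingPartialAction.delta]

lemma P_delta_ne (t s : G) (a : A) (ha : a ∈ pa.D t) (h : s ≠ t) :
    pa.P s (pa.delta t a ha) = 0 := by
  simp [RingPartialAction.P, RingPartialAction.delta, DFinsupp.single_apply, h.symm]

lemma delta_ind {p : pa.SkewRing → Prop} (h0 : p 0)
    (hd : ∀ t a ha, p (pa.delta t a ha)) (hadd : ∀ x y, p x → p y → p (x + y)) (x : pa.SkewRing) :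
    p x := by
  refine DFinsupp.induction x h0 ?_
  intro i b f _ _ hf
  exact hadd _ _ (hd i b.1 b.2) hf

variable {pa} (S : SkewMul pa)

/-- ring structure -/
abbrev toRing : NonUnitalRing pa.SkewRing :=
  { (inferInstance : AddCommGroup pa.SkewRing) with
    mul := S.mul
    left_distrib := S.left_distrib
    right_distrib := S.right_distrib
    mul_assoc := S.assoc
    zero_mul := fun a => by
      have h := S.right_distrib 0 0 a
      rw [add_zero] at h
      exact left_eq_add.mp h
    mul_zero := fun a => by
      have h := S.left_distrib a 0 0
      rw [add_zero] at h
      exact left_eq_add.mp h }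

lemma zero_mul' (a : pa.SkewRing) : S.mul 0 a = 0 := (toRing S).zero_mul a
lemma mul_zero' (a : pa.SkewRing) : S.mul a 0 = 0 := (toRing S).mul_zero a

lemma mul_delta (t s : G) (a : A) (ha : a ∈ pa.D t) (b : A) (hb : b ∈ pa.D s) :
    ∃ c hc, S.mul (pa.delta t a ha) (pa.delta s b hb) = pa.delta (t * s) c hc := by
  refine ⟨_, P_mem pa (t * s) (S.mul (pa.delta t a ha) (pa.delta s b hb)), P_ext pa fun g => ?_⟩
  by_cases h : g = t * s
  · subst h; rw [P_delta_same]
  · rw [P_delta_ne pa _ _ _ _ h, S.mul_single, if_neg h]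

lemma P_mul_delta (r : pa.SkewRing) (t s : G) (b : A) (hb : b ∈ pa.D s) :
    pa.P (t * s) (S.mul r (pa.delta s b hb)) = pa.α t (pa.α t⁻¹ (pa.P t r) * b) := by
  induction r using delta_ind pa with
  | h0 => rw [zero_mul', P_zero, P_zero, alpha_zero, zero_mul, alpha_zero]
  | hd u a ha =>
    rw [S.mul_single]
    by_cases h : t = u
    · subst h; rw [if_pos rfl, P_delta_same]
    · rw [if_neg (by simpa using h), P_delta_ne pa _ _ _ _ h, alpha_zero, zero_mul, alpha_zero]
  | hadd x y hx hy =>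
    have m : ∀ x, pa.P t x ∈ pa.D (t⁻¹)⁻¹ := fun x => by simpa using P_mem pa t x
    have m' : ∀ x, pa.α t⁻¹ (pa.P t x) * b ∈ pa.D t⁻¹ := fun x =>
      pa.idl_right _ _ (pa.α_mem _ _ (m x)) _
    rw [S.right_distrib, P_add, P_add, hx, hy, pa.α_add _ _ (m x) _ (m y), add_mul,
      pa.α_add _ _ (m' x) _ (m' y)]

lemma P_delta_mul (r : pa.SkewRing) (t s : G) (a : A) (ha : a ∈ pa.D t) :
    pa.P (t * s) (S.mul (pa.delta t a ha) r) = pa.α t (pa.α t⁻¹ a * pa.P s r) := by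
  induction r using delta_ind pa with
  | h0 => rw [mul_zero', P_zero, P_zero, mul_zero, alpha_zero]
  | hd u b hb =>
    rw [S.mul_single]
    by_cases h : s = u
    · subst h; rw [if_pos rfl, P_delta_same]
    · rw [if_neg (by simpa using h), P_delta_ne pa _ _ _ _ h, mul_zero, alpha_zero]
  | hadd x y hx hy =>
    have m' : ∀ x, pa.α t⁻¹ a * pa.P s x ∈ pa.D t⁻¹ := fun x =>
      pa.idl_right _ _ (alpha_inv_mem pa t a ha) _
    rw [S.left_distrib, P_add, P_add, hx, hy, mul_add,
      pa.α_add _ _ (m' x) _ (m' y)]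

lemma P_unit_mul (r : pa.SkewRing) (s : G) (e : A) :
    pa.P s (S.mul (pa.unitDelta e) r) = e * pa.P s r := by
  have h := P_delta_mul S r 1 s e (mem_one pa e)
  rw [one_mul, pa.α_one, inv_one, pa.α_one] at h
  exact h

lemma P_mul_unit_one (r : pa.SkewRing) (e : A) :
    pa.P 1 (S.mul r (pa.unitDelta e)) = pa.P 1 r * e := by
  have h := P_mul_delta S r 1 1 e (mem_one pa e)
  rw [one_mul, pa.α_one, inv_one, pa.α_one] at h
  exact h

lemma P_mul_unit (r : pa.SkewRing) (t : G) (e : A) :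
    pa.P t (S.mul r (pa.unitDelta e)) = pa.α t (pa.α t⁻¹ (pa.P t r) * e) := by
  have h := P_mul_delta S r t 1 e (mem_one pa e)
  rw [mul_one] at h
  exact h

lemma unit_idem {e : A} (he : e * e = e) :
    S.mul (pa.unitDelta e) (pa.unitDelta e) = pa.unitDelta e := by
  refine P_ext pa fun g => ?_
  rw [P_unit_mul]
  by_cases h : g = 1
  · subst h; rw [RingPartialAction.unitDelta, P_delta_same, he]
  · rw [RingPartialAction.unitDelta, P_delta_ne pa _ _ _ _ h, mul_zero]

/-- abstract ring lemma -/
lemma center_inv {R : Type*} [NonUnitalRing R]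
    (hs : ∀ J : Set R, IsRingIdeal J → J = {0} ∨ J = Set.univ) (e x : R) (he : e * e = e)
    (hx : ∃ z, x = e * (z * e))
    (hc : ∀ y, (∃ z, y = e * (z * e)) → x * y = y * x) (x0 : x ≠ 0) :
    ∃ y, ((∃ z, y = e * (z * e)) ∧ ∀ w, (∃ z, w = e * (z * e)) → y * w = w * y) ∧
      x * y = e ∧ y * x = e := by
  have hid : ∀ z, (∃ w, z = e * (w * e)) → e * z = z ∧ z * e = z := by
    rintro z ⟨w, rfl⟩
    refine ⟨by rw [← mul_assoc, he], by rw [mul_assoc, mul_assoc, he]⟩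
  obtain ⟨ex, xe⟩ := hid x hx
  have hJ := hs {r | ∀ p q, ∃ c, e * p * r * q * e = x * (e * (c * e))} (by
    refine ⟨fun p q => ⟨0, by simp⟩, ?_, ?_, ?_⟩
    · intro a ha b hb p q
      obtain ⟨c, hc⟩ := ha p q
      obtain ⟨d, hd⟩ := hb p q
      exact ⟨c + d, by simp only [mul_add, add_mul, hc, hd]⟩
    · intro a ha p q
      obtain ⟨c, hc⟩ := ha p q
      exact ⟨-c, by simp only [mul_neg, neg_mul, hc]⟩
    · intro a ha b
      constructor
      · intro p q
        obtain ⟨c, hc⟩ := ha p (b * q)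
        exact ⟨c, by rw [← hc]; simp only [mul_assoc]⟩
      · intro p q
        obtain ⟨c, hc⟩ := ha (p * b) q
        exact ⟨c, by rw [← hc]; simp only [mul_assoc]⟩)
  have hxJ : x ∈ {r | ∀ p q, ∃ c, e * p * r * q * e = x * (e * (c * e))} := by
    intro p q
    refine ⟨p * e * q, ?_⟩
    have h1 := hc (e * (p * e)) ⟨p, rfl⟩
    calc e * p * x * q * e = (e * (p * e)) * x * q * e := by
          conv_lhs => rw [← ex]
          simp only [mul_assoc]
      _ = _ := by rw [← h1]; simp only [mul_assoc]
  rcases hJ with hJ | hJ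
  · rw [hJ] at hxJ; exact absurd hxJ x0
  have heJ : e ∈ {r | ∀ p q, ∃ c, e * p * r * q * e = x * (e * (c * e))} := by
    rw [hJ]; trivial
  obtain ⟨c, hce⟩ := heJ e e
  simp only [he] at hce
  have hyx : e * (c * e) * x = e := by rw [← hc _ ⟨c, rfl⟩, ← hce]
  refine ⟨e * (c * e), ⟨⟨c, rfl⟩, ?_⟩, hce.symm, hyx⟩
  intro w hw
  obtain ⟨ew, we⟩ := hid w hw
  obtain ⟨ey, ye⟩ := hid (e * (c * e)) ⟨c, rfl⟩
  generalize e * (c * e) = y at *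
  calc y * w = y * (w * (x * y)) := by rw [← hce, we]
    _ = y * (w * x) * y := by simp only [mul_assoc]
    _ = y * (x * w) * y := by rw [hc w hw]
    _ = (y * x) * w * y := by simp only [mul_assoc]
    _ = w * y := by rw [hyx, ew]

lemma gsimple_of_simple
    (hs : ∀ J : Set pa.SkewRing, IsSkewIdeal S J → J = {0} ∨ J = Set.univ) : GSimple pa := by
  intro I hI hG
  obtain ⟨i0, iadd, ineg, imul⟩ := hI
  have hJ := hs {r | ∀ t, pa.P t r ∈ I} (by
    refine ⟨fun t => by rw [P_zero]; exact i0, ?_, ?_, ?_⟩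
    · intro x hx y hy t; rw [P_add]; exact iadd _ (hx t) _ (hy t)
    · intro x hx t; rw [P_neg]; exact ineg _ (hx t)
    · intro x hx y
      induction y using delta_ind pa with
      | h0 =>
        rw [zero_mul', mul_zero']
        exact ⟨fun t => by rw [P_zero]; exact i0, fun t => by rw [P_zero]; exact i0⟩
      | hd s b hb =>
        constructor
        · intro g
          have h := P_mul_delta S x (g * s⁻¹) s b hb
          rw [inv_mul_cancel_right] at h
          rw [h]
          have h1 : pa.α (g * s⁻¹)⁻¹ (pa.P (g * s⁻¹) x) ∈ I :=
            (hG _ _ (hx _) (by rw [inv_inv]; exact P_mem pa _ _)).1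
          exact (hG _ _ (imul _ h1 b).1 (pa.idl_right _ _ (alpha_inv_mem pa _ _ (P_mem pa _ _)) _)).1
        · intro g
          have h := P_delta_mul S x s (s⁻¹ * g) b hb
          rw [mul_inv_cancel_left] at h
          rw [h]
          exact (hG _ _ (imul _ (hx _) _).2 (pa.idl_right _ _ (alpha_inv_mem pa _ _ hb) _)).1
      | hadd y z hy hz =>
        rw [S.left_distrib, S.right_distrib]
        exact ⟨fun t => by rw [P_add]; exact iadd _ (hy.1 t) _ (hz.1 t),
          fun t => by rw [P_add]; exact iadd _ (hy.2 t) _ (hz.2 t)⟩)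
  rcases hJ with hJ | hJ
  · left
    ext a
    constructor
    · intro ha
      have : pa.unitDelta a ∈ {r | ∀ t, pa.P t r ∈ I} := by
        intro t
        by_cases h : t = 1
        · subst h; rw [RingPartialAction.unitDelta, P_delta_same]; exact ha
        · rw [RingPartialAction.unitDelta, P_delta_ne pa _ _ _ _ h]; exact i0
      rw [hJ] at this
      have h2 := congrArg (pa.P 1) (Set.mem_singleton_iff.mp this)
      rw [RingPartialAction.unitDelta, P_delta_same, P_zero] at h2
      exact h2
    · intro h; rw [Set.mem_singleton_iff.mp h]; exact i0
  · right
    refine Set.eq_univ_of_forall fun a => ?_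
    have : pa.unitDelta a ∈ {r | ∀ t, pa.P t r ∈ I} := by rw [hJ]; trivial
    have h := this 1
    rw [RingPartialAction.unitDelta, P_delta_same] at h
    exact h

end PSG

namespace PSG
variable {G : Type*} [CommGroup G] [DecidableEq G] {A : Type*} [NonUnitalRing A]
    {pa : RingPartialAction G A} (S : SkewMul pa)

lemma exists_min (hD : ∀ t : G, SubsetHasLocalUnits (pa.D t : Set A))
    (J : Set pa.SkewRing) (hJ : IsSkewIdeal S J) (r : pa.SkewRing) (hr : r ∈ J) (r0 : r ≠ 0) :
    ∃ F : Finset G, 1 ∈ F ∧ (∃ r ∈ J, (∀ t ∉ F, pa.P t r = 0) ∧ pa.P 1 r ≠ 0) ∧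
      ∀ F' : Finset G, F'.card < F.card → ∀ x ∈ J, (∀ t ∉ F', pa.P t x = 0) → x = 0 := by
  classical
  have hex : ∃ n, ∃ F : Finset G, F.card = n ∧ ∃ r ∈ J, r ≠ 0 ∧ ∀ t ∉ F, pa.P t r = 0 :=
    ⟨_, r.support, rfl, r, hr, r0, fun t ht => by
      simpa [RingPartialAction.P] using ht⟩
  obtain ⟨F, hF, x, hx, x0, hxF⟩ := Nat.find_spec hex
  have hmin : ∀ F' : Finset G, F'.card < F.card → ∀ x ∈ J, (∀ t ∉ F', pa.P t x = 0) → x = 0 := by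
    intro F' h x hx hxF
    by_contra x0
    rw [hF] at h
    exact Nat.find_min hex h ⟨F', rfl, x, hx, x0, hxF⟩
  obtain ⟨t, ht⟩ : ∃ t, pa.P t x ≠ 0 := by
    by_contra h
    push Not at h
    exact x0 (P_ext pa fun g => by rw [h, P_zero])
  obtain ⟨b, hb, -, hbu⟩ := hD t⁻¹ {pa.α t⁻¹ (pa.P t x)} (by
    intro a ha
    rw [Finset.mem_singleton.mp ha]
    exact alpha_inv_mem pa t _ (P_mem pa _ _))
  have hbu := (hbu _ (Finset.mem_singleton_self _)).2
  have h1 : pa.P 1 (S.mul x (pa.delta t⁻¹ b hb)) = pa.P t x := by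
    have h := P_mul_delta S x t t⁻¹ b hb
    rw [mul_inv_cancel, hbu, alpha_right_inv pa t _ (P_mem pa _ _)] at h
    exact h
  have h2 : ∀ g ∉ F.image (· * t⁻¹), pa.P g (S.mul x (pa.delta t⁻¹ b hb)) = 0 := by
    intro g hg
    have h := P_mul_delta S x (g * t) t⁻¹ b hb
    rw [mul_inv_cancel_right] at h
    rw [h, hxF (g * t), alpha_zero, zero_mul, alpha_zero]
    intro hgF
    exact hg (Finset.mem_image.mpr ⟨_, hgF, by simp⟩)
  refine ⟨F.image (· * t⁻¹), ?_, ⟨_, (hJ.2.2.2 x hx _).1, h2, by rwa [h1]⟩, ?_⟩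
  · by_contra h
    exact ht (by rw [← h1, h2 1 h])
  · intro F' h
    exact hmin F' (h.trans_le Finset.card_image_le)

lemma exists_coeff (hD : ∀ t : G, SubsetHasLocalUnits (pa.D t : Set A)) (hG : GSimple pa)
    (J : Set pa.SkewRing) (hJ : IsSkewIdeal S J) (F : Finset G)
    (hF : ∃ r ∈ J, (∀ t ∉ F, pa.P t r = 0) ∧ pa.P 1 r ≠ 0) (a : A) :
    ∃ r ∈ J, (∀ t ∉ F, pa.P t r = 0) ∧ pa.P 1 r = a := by
  obtain ⟨j0, jadd, jneg, jmul⟩ := hJ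
  have h := hG {a | ∃ r ∈ J, (∀ t ∉ F, pa.P t r = 0) ∧ pa.P 1 r = a} (by
    refine ⟨⟨0, j0, fun t _ => P_zero pa t, P_zero pa 1⟩, ?_, ?_, ?_⟩
    · rintro _ ⟨x, hx, hxF, rfl⟩ _ ⟨y, hy, hyF, rfl⟩
      exact ⟨x + y, jadd _ hx _ hy, fun t ht => by rw [P_add, hxF t ht, hyF t ht, add_zero],
        P_add _ _ _ _⟩
    · rintro _ ⟨x, hx, hxF, rfl⟩
      exact ⟨-x, jneg _ hx, fun t ht => by rw [P_neg, hxF t ht, neg_zero], P_neg _ _ _⟩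
    · rintro _ ⟨x, hx, hxF, rfl⟩ b
      exact ⟨⟨_, (jmul x hx (pa.unitDelta b)).1, fun t ht => by
          rw [P_mul_unit, hxF t ht, alpha_zero, zero_mul, alpha_zero], P_mul_unit_one _ _ _⟩,
        ⟨_, (jmul x hx (pa.unitDelta b)).2, fun t ht => by
          rw [P_unit_mul, hxF t ht, mul_zero], P_unit_mul _ _ _ _⟩⟩) (by
    rintro t _ ⟨x, hx, hxF, rfl⟩ ha
    refine ⟨?_, pa.α_mem _ _ ha⟩
    obtain ⟨e, he, -, heu⟩ := hD t⁻¹ {pa.P 1 x} (by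
      intro a ha'
      rw [Finset.mem_singleton.mp ha']
      exact ha)
    obtain ⟨ea, ae⟩ := heu _ (Finset.mem_singleton_self _)
    have hc : ∀ g, pa.P g (S.mul (S.mul (pa.delta t (pa.α t e) (pa.α_mem _ _ he)) x)
        (pa.delta t⁻¹ e he)) = pa.α (t * g) (pa.α (t * g)⁻¹ (pa.α t (e * pa.P g x)) * e) := by
      intro g
      have h1 := P_mul_delta S (S.mul (pa.delta t (pa.α t e) (pa.α_mem _ _ he)) x) (t * g) t⁻¹ e he
      rw [P_delta_mul, pa.α_left_inv t e he] at h1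
      rwa [show t * g * t⁻¹ = g by rw [mul_comm t g, mul_inv_cancel_right]] at h1
    refine ⟨_, (jmul _ (jmul x hx (pa.delta t (pa.α t e) (pa.α_mem _ _ he))).2
      (pa.delta t⁻¹ e he)).1, ?_, ?_⟩
    · intro g hg
      rw [hc, hxF g hg, mul_zero, alpha_zero, alpha_zero, zero_mul, alpha_zero]
    · rw [hc, mul_one, ea, pa.α_left_inv t _ ha, ae])
  rcases h with h | h
  · obtain ⟨r, hr, hrF, h1⟩ := hF
    have : pa.P 1 r ∈ {a | ∃ r ∈ J, (∀ t ∉ F, pa.P t r = 0) ∧ pa.P 1 r = a} := ⟨r, hr, hrF, rfl⟩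
    rw [h] at this
    exact absurd this h1
  · have : a ∈ {a | ∃ r ∈ J, (∀ t ∉ F, pa.P t r = 0) ∧ pa.P 1 r = a} := by rw [h]; trivial
    exact this

lemma central_of_min 
    (J : Set pa.SkewRing) (hJ : IsSkewIdeal S J) (F : Finset G) (F1 : 1 ∈ F)
    (hmin : ∀ F' : Finset G, F'.card < F.card → ∀ x ∈ J, (∀ t ∉ F', pa.P t x = 0) → x = 0)
    (e : A) (he : e * e = e) (r : pa.SkewRing) (hr : r ∈ J) (hrF : ∀ t ∉ F, pa.P t r = 0)
    (hr1 : pa.P 1 r = e) (z : pa.SkewRing) :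
    S.mul r (S.mul (pa.unitDelta e) (S.mul z (pa.unitDelta e))) =
      S.mul (S.mul (pa.unitDelta e) (S.mul z (pa.unitDelta e))) r := by
  induction z using delta_ind pa with
  | h0 => simp only [zero_mul', mul_zero']
  | hadd x y hx hy => simp only [S.left_distrib, S.right_distrib, hx, hy]
  | hd s b hb =>
    have uu := unit_idem S he
    obtain ⟨c, hc, hy⟩ : ∃ c hc, S.mul (pa.unitDelta e) (S.mul (pa.delta s b hb) (pa.unitDelta e))
        = pa.delta s c hc := by
      obtain ⟨c, hc, h⟩ := mul_delta S s 1 b hb e (mem_one pa e)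
      obtain ⟨d, hd, h'⟩ := mul_delta S 1 (s * 1) e (mem_one pa e) c hc
      have hs : 1 * (s * 1) = s := by simp
      refine ⟨d, hs ▸ hd, ?_⟩
      unfold RingPartialAction.unitDelta
      rw [h, h']
      congr 1
    have ey : S.mul (pa.unitDelta e) (pa.delta s c hc) = pa.delta s c hc := by
      rw [← hy, ← S.assoc, uu]
    have ye : S.mul (pa.delta s c hc) (pa.unitDelta e) = pa.delta s c hc := by
      rw [← hy, S.assoc, S.assoc, uu]
    rw [hy]
    have u1 : pa.P 1 (pa.unitDelta e) = e := by rw [RingPartialAction.unitDelta, P_delta_same]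
    obtain ⟨j0, jadd, jneg, jmul⟩ := hJ
    refine sub_eq_zero.mp (hmin ((F.erase 1).image (· * s)) ?_ _ ?_ ?_)
    · exact Finset.card_image_le.trans_lt (Finset.card_erase_lt_of_mem F1)
    · rw [sub_eq_add_neg]
      exact jadd _ (jmul r hr _).1 _ (jneg _ (jmul r hr _).2)
    · intro g hg
      have h1 : ∀ r, pa.P g (S.mul r (pa.delta s c hc)) =
          pa.α (g * s⁻¹) (pa.α (g * s⁻¹)⁻¹ (pa.P (g * s⁻¹) r) * c) := by
        intro r
        have h := P_mul_delta S r (g * s⁻¹) s c hc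
        rwa [inv_mul_cancel_right] at h
      have h2 : ∀ r, pa.P g (S.mul (pa.delta s c hc) r) =
          pa.α s (pa.α s⁻¹ c * pa.P (g * s⁻¹) r) := by
        intro r
        have h := P_delta_mul S r s (g * s⁻¹) c hc
        rwa [mul_comm s, inv_mul_cancel_right] at h
      rw [P_sub]
      by_cases hgs : g * s⁻¹ = 1
      · have e1 : pa.P g (S.mul r (pa.delta s c hc)) = pa.P g (pa.delta s c hc) := by
          conv_rhs => rw [← ey]
          rw [h1, h1, hgs, hr1, u1]
        have e2 : pa.P g (S.mul (pa.delta s c hc) r) = pa.P g (pa.delta s c hc) := by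
          conv_rhs => rw [← ye]
          rw [h2, h2, hgs, hr1, u1]
        rw [e1, e2, sub_self]
      · have hn : g * s⁻¹ ∉ F := fun hm =>
          hg (Finset.mem_image.mpr ⟨_, Finset.mem_erase.mpr ⟨hgs, hm⟩, by simp⟩)
        rw [h1, h2, hrF _ hn, mul_zero, alpha_zero, alpha_zero, zero_mul, alpha_zero, sub_self]

end PSG

theorem simplicity_of_partial_skew_group_ring
    {G : Type*} [CommGroup G] [DecidableEq G] {A : Type*} [NonUnitalRing A]
    (pa : RingPartialAction G A) (S : SkewMul pa)
    (E : Set A) (hE : IsLocalUnitSet E)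
    (hD : ∀ t : G, SubsetHasLocalUnits (pa.D t : Set A)) :
    (∀ J : Set pa.SkewRing, IsSkewIdeal S J → J = {0} ∨ J = Set.univ) ↔
      (GSimple pa ∧ ∀ e ∈ E,
        -- `C_e` is a field: it is a commutative unital ring with identity `eδ_0` …
        (pa.unitDelta e ∈ Ce S e) ∧
        (∀ x ∈ Ce S e, S.mul (pa.unitDelta e) x = x ∧ S.mul x (pa.unitDelta e) = x) ∧
        (∀ x ∈ Ce S e, ∀ y ∈ Ce S e, S.mul x y = S.mul y x) ∧
        -- … in which every nonzero element is invertible.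
        (∀ x ∈ Ce S e, x ≠ 0 →
          ∃ y ∈ Ce S e, S.mul x y = pa.unitDelta e ∧ S.mul y x = pa.unitDelta e)) := by
  constructor
  · intro hs
    refine ⟨PSG.gsimple_of_simple S hs, fun e he => ?_⟩
    have uu := PSG.unit_idem S (hE.1 e he)
    refine ⟨⟨⟨pa.unitDelta e, by rw [uu, uu]⟩, ?_⟩, ?_, ?_, ?_⟩
    · rintro y ⟨z, rfl⟩
      rw [← S.assoc, uu, S.assoc, S.assoc, uu]
    · rintro x ⟨⟨z, rfl⟩, -⟩
      exact ⟨by rw [← S.assoc, uu], by rw [S.assoc, S.assoc, uu]⟩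
    · intro x hx y hy
      exact hx.2 y hy.1
    · intro x hx x0
      letI := PSG.toRing S
      exact PSG.center_inv (R := pa.SkewRing) hs (pa.unitDelta e) x uu hx.1 hx.2 x0
  · rintro ⟨hG, hC⟩ J hJ
    by_cases h0 : ∃ r ∈ J, r ≠ 0
    · right
      obtain ⟨r, hr, r0⟩ := h0
      obtain ⟨F, F1, hF, hmin⟩ := PSG.exists_min S hD J hJ r hr r0
      have hEJ : ∀ e ∈ E, pa.unitDelta e ∈ J := by
        intro e he
        have hee := hE.1 e he
        have uu := PSG.unit_idem S hee
        obtain ⟨x, hx, hxF, hx1⟩ := PSG.exists_coeff S hD hG J hJ F hF e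
        have hyJ : S.mul (pa.unitDelta e) (S.mul x (pa.unitDelta e)) ∈ J :=
          (hJ.2.2.2 _ (hJ.2.2.2 x hx _).1 _).2
        have hy1 : pa.P 1 (S.mul (pa.unitDelta e) (S.mul x (pa.unitDelta e))) = e := by
          rw [PSG.P_unit_mul, PSG.P_mul_unit_one, hx1, hee, hee]
        have hyF : ∀ t ∉ F, pa.P t (S.mul (pa.unitDelta e) (S.mul x (pa.unitDelta e))) = 0 := by
          intro t ht
          rw [PSG.P_unit_mul, PSG.P_mul_unit, hxF t ht, PSG.alpha_zero, zero_mul, PSG.alpha_zero,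
            mul_zero]
        have hc := PSG.central_of_min S J hJ F F1 hmin e hee _ hyJ hyF hy1
        have hyC : S.mul (pa.unitDelta e) (S.mul x (pa.unitDelta e)) ∈ Ce S e :=
          ⟨⟨x, rfl⟩, by rintro y ⟨z, rfl⟩; exact hc z⟩
        by_cases hy0 : S.mul (pa.unitDelta e) (S.mul x (pa.unitDelta e)) = 0
        · have e0 : e = 0 := by rw [← hy1, hy0, PSG.P_zero]
          have : pa.unitDelta e = 0 := by
            subst e0
            refine PSG.P_ext pa fun g => ?_
            by_cases h : g = 1
            · subst h; rw [RingPartialAction.unitDelta, PSG.P_delta_same, PSG.P_zero]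
            · rw [RingPartialAction.unitDelta, PSG.P_delta_ne pa _ _ _ _ h, PSG.P_zero]
          rw [this]; exact hJ.1
        · obtain ⟨y, -, h, -⟩ := (hC e he).2.2.2 _ hyC hy0
          rw [← h]
          exact (hJ.2.2.2 _ hyJ _).1
      refine Set.eq_univ_of_forall fun x => ?_
      induction x using PSG.delta_ind pa with
      | h0 => exact hJ.1
      | hadd x y hx hy => exact hJ.2.1 _ hx _ hy
      | hd t a ha =>
        obtain ⟨e, he, hu⟩ := hE.2 {a}
        have hea := (hu a (Finset.mem_singleton_self _)).1
        have : S.mul (pa.unitDelta e) (pa.delta t a ha) = pa.delta t a ha := by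
          refine PSG.P_ext pa fun g => ?_
          rw [PSG.P_unit_mul]
          by_cases h : g = t
          · subst h; rw [PSG.P_delta_same, hea]
          · rw [PSG.P_delta_ne pa _ _ _ _ h, mul_zero]
        rw [← this]
        exact (hJ.2.2.2 _ (hEJ e he) _).1
    · left
      push Not at h0
      ext x
      exact ⟨fun h => h0 x h, fun h => by rw [Set.mem_singleton_iff.mp h]; exact hJ.1⟩
end

section
/- Let A be a ring with local units, let G be a group, and let α be a partial action of G on A such that the partial skew group ring R = A ⋆_α G is associative. If J is a G-invariant ideal of A with J ≠ {0} and J ≠ A, then the set I = {r ∈ R : P_t(r) ∈ J for all t ∈ G} is a two-sided ideal of R with I ≠ {0} and I ≠ R. -/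
theorem skew_mul_delta_mem
    {G : Type*} [Group G] [DecidableEq G] {A : Type*} [NonUnitalRing A]
    (pa : RingPartialAction G A) (S : SkewMul pa)
    (J : Set A) (hJ : IsRingIdeal J) (hJinv : GInvariant pa J)
    (t s : G) (a : A) (ha : a ∈ pa.D t) (b : A) (hb : b ∈ pa.D s) (hab : a ∈ J ∨ b ∈ J) (g : G) :
    pa.P g (S.mul (pa.delta t a ha) (pa.delta s b hb)) ∈ J := by
  rw [S.mul_single]
  split_ifs with h
  · have ha' : a ∈ pa.D (t⁻¹)⁻¹ := by rwa [inv_inv]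
    have h1 : pa.α t⁻¹ a * b ∈ J := by
      rcases hab with h | h
      · exact (hJ.2.2.2 _ (hJinv t⁻¹ a h ha').1 b).1
      · exact (hJ.2.2.2 _ h _).2
    exact (hJinv t _ h1 (pa.idl_right _ _ (pa.α_mem t⁻¹ a ha') b)).1
  · exact hJ.1

theorem skew_mul_mem
    {G : Type*} [Group G] [DecidableEq G] {A : Type*} [NonUnitalRing A]
    (pa : RingPartialAction G A) (S : SkewMul pa)
    (J : Set A) (hJ : IsRingIdeal J) (hJinv : GInvariant pa J)
    (x y : pa.SkewRing) (h : (∀ t, pa.P t x ∈ J) ∨ (∀ t, pa.P t y ∈ J)) :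
    ∀ g, pa.P g (S.mul x y) ∈ J := by
  have z1 : ∀ z, S.mul 0 z = 0 := fun z => by
    have := S.right_distrib 0 0 z
    rw [add_zero] at this
    exact left_eq_add.mp this
  have z2 : ∀ z, S.mul z 0 = 0 := fun z => by
    have := S.left_distrib z 0 0
    rw [add_zero] at this
    exact left_eq_add.mp this
  have split : ∀ (i : G) (b : pa.D i) (f : pa.SkewRing), f i = 0 →
      (∀ t, pa.P t (DFinsupp.single i b + f) ∈ J) → (b : A) ∈ J ∧ ∀ t, pa.P t f ∈ J := by
    intro i b f hf hh
    refine ⟨?_, fun t => ?_⟩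
    · have := hh i
      simpa [RingPartialAction.P, hf] using this
    · by_cases hti : t = i
      · subst hti
        simp only [RingPartialAction.P, hf]
        exact hJ.1
      · have := hh t
        simpa [RingPartialAction.P, DFinsupp.single_eq_of_ne hti] using this
  induction x using DFinsupp.induction with
  | h0 => intro g; rw [z1]; exact hJ.1
  | ha i b f hf hb ih =>
    intro g
    rw [S.right_distrib]
    have h1 : ((b : A) ∈ J ∧ ∀ t, pa.P t f ∈ J) ∨ ∀ t, pa.P t y ∈ J :=
      h.imp (split i b f hf) id
    refine hJ.2.1 _ ?_ _ (ih (h1.imp And.right id) g)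
    have h2 : (b : A) ∈ J ∨ ∀ t, pa.P t y ∈ J := h1.imp And.left id
    clear ih h h1 hf
    induction y using DFinsupp.induction with
    | h0 => rw [z2]; exact hJ.1
    | ha j c k hk hc ih =>
      rw [S.left_distrib]
      have h3 : (b : A) ∈ J ∨ ((c : A) ∈ J ∧ ∀ t, pa.P t k ∈ J) := h2.imp id (split j c k hk)
      exact hJ.2.1 _ (skew_mul_delta_mem pa S J hJ hJinv i j b b.2 c c.2
        (h3.imp id And.left) g) _ (ih (h3.imp id And.right))

theorem skew_ideal_of_invariant_ideal
    {G : Type*} [Group G] [DecidableEq G] {A : Type*} [NonUnitalRing A]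
    (pa : RingPartialAction G A) (S : SkewMul pa)
    (hA : HasLocalUnits A)
    (J : Set A) (hJ : IsRingIdeal J) (hJinv : GInvariant pa J)
    (hJ0 : J ≠ {0}) (hJA : J ≠ Set.univ) :
    IsSkewIdeal S {r : pa.SkewRing | ∀ t : G, pa.P t r ∈ J} ∧
      {r : pa.SkewRing | ∀ t : G, pa.P t r ∈ J} ≠ {0} ∧
      {r : pa.SkewRing | ∀ t : G, pa.P t r ∈ J} ≠ Set.univ := by
  have hm : ∀ a : A, a ∈ pa.D 1 := fun a => by rw [pa.D_one]; exact AddSubgroup.mem_top a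
  have h1 : ∀ a : A, pa.P 1 (pa.delta 1 a (hm a)) = a := fun a => by
    simp [RingPartialAction.P, RingPartialAction.delta]
  refine ⟨⟨fun t => hJ.1, fun x hx y hy t => hJ.2.1 _ (hx t) _ (hy t),
    fun x hx t => hJ.2.2.1 _ (hx t), fun x hx y =>
      ⟨skew_mul_mem pa S J hJ hJinv x y (Or.inl hx),
        skew_mul_mem pa S J hJ hJinv y x (Or.inr hx)⟩⟩, ?_, ?_⟩
  · intro h
    apply hJ0
    ext a
    refine ⟨fun ha => ?_, fun ha => ?_⟩
    · have : pa.delta 1 a (hm a) ∈ {r : pa.SkewRing | ∀ t : G, pa.P t r ∈ J} := by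
        intro t
        by_cases ht : t = 1
        · subst ht; rw [h1]; exact ha
        · have : pa.P t (pa.delta 1 a (hm a)) = 0 := by
            simp [RingPartialAction.P, RingPartialAction.delta, DFinsupp.single_eq_of_ne ht]
          rw [this]; exact hJ.1
      rw [h] at this
      have h2 := h1 a
      rw [Set.mem_singleton_iff.mp this] at h2
      exact h2.symm
    · rw [Set.mem_singleton_iff.mp ha]; exact hJ.1
  · intro h
    apply hJA
    ext a
    refine ⟨fun _ => trivial, fun _ => ?_⟩
    have : pa.delta 1 a (hm a) ∈ {r : pa.SkewRing | ∀ t : G, pa.P t r ∈ J} := by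
      rw [h]; trivial
    have h2 := this 1
    rwa [h1] at h2
end

section
/- Let θ = ({X_t}_{t∈G}, {h_t}_{t∈G}) be a partial action of a group G on a set X, let K be a field, and let α be the induced partial action of G on F₀(X). Then θ is minimal if and only if F₀(X) is G-simple, i.e., the only G-invariant ideals of F₀(X) are {0} and F₀(X). -/
/-- A partial action `θ = ({X_t}, {h_t})` of a group `G` on a set `X`: subsets
`Xt t ⊆ X` and bijections `h t : Xt t⁻¹ → Xt t` (encoded as globally defined maps
whose values only matter on `Xt t⁻¹`). -/
structure SetPartialAction (G : Type*) [Group G] (X : Type*) where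
  Xt : G → Set X
  h : G → X → X
  h_mem : ∀ t, ∀ x ∈ Xt t⁻¹, h t x ∈ Xt t
  Xt_one : Xt 1 = Set.univ
  h_one : ∀ x, h 1 x = x
  h_left_inv : ∀ t, ∀ x ∈ Xt t⁻¹, h t⁻¹ (h t x) = x
  h_image : ∀ t s, h t '' (Xt t⁻¹ ∩ Xt s) = Xt t ∩ Xt (t * s)
  h_comp : ∀ t s, ∀ x ∈ Xt s⁻¹, x ∈ Xt (s⁻¹ * t⁻¹) → h t (h s x) = h (t * s) x

namespace SetPartialAction

variable {G : Type*} [Group G] {X : Type*}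

/-- A subset `V ⊆ X` is `G`-invariant if `h t (V ∩ Xt t⁻¹) ⊆ V` for all `t`. -/
def Invariant (θ : SetPartialAction G X) (V : Set X) : Prop :=
  ∀ t : G, θ.h t '' (V ∩ θ.Xt t⁻¹) ⊆ V

/-- `θ` is minimal if `∅` and `X` are the only `G`-invariant subsets of `X`. -/
def Minimal (θ : SetPartialAction G X) : Prop :=
  ∀ V : Set X, θ.Invariant V → V = ∅ ∨ V = Set.univ

/-- `θ` is free if `h t x = x` for some `x ∈ Xt t⁻¹` implies `t = 1`. -/
def Free (θ : SetPartialAction G X) : Prop :=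
  ∀ t : G, ∀ x ∈ θ.Xt t⁻¹, θ.h t x = x → t = 1

end SetPartialAction
section F0

variable {G : Type*} [Group G] {X : Type*} {K : Type*} [Field K]

/-- `F₀(V)`: the finitely supported functions `X → K` vanishing off `V`,
as a subset of `F₀(X) = X →₀ K`. -/
def F0 (K : Type*) [Field K] {X : Type*} (V : Set X) : Set (X →₀ K) :=
  {f : X →₀ K | ∀ x ∉ V, f x = 0}

/-- `I` is a (two-sided) ring ideal of `F₀(X)`. -/
def IsIdealF0 {X : Type*} (K : Type*) [Field K] (I : Set (X →₀ K)) : Prop :=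
  (0 : X →₀ K) ∈ I ∧ (∀ f ∈ I, ∀ g ∈ I, f + g ∈ I) ∧ (∀ f ∈ I, -f ∈ I) ∧
    (∀ f ∈ I, ∀ g : X →₀ K, f * g ∈ I ∧ g * f ∈ I)

open Classical in
/-- The induced map `α t : F₀(X) → F₀(X)`, `α t f = f ∘ h t⁻¹` on `Xt t`,
extended by zero off `Xt t`. -/
noncomputable def amap (θ : SetPartialAction G X) (K : Type*) [Field K] (t : G)
    (f : X →₀ K) : X →₀ K :=
  Finsupp.onFinset (f.support.image (θ.h t))
    (fun x => if x ∈ θ.Xt t then f (θ.h t⁻¹ x) else 0)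
    (by
      intro x hx
      by_cases hxt : x ∈ θ.Xt t
      · simp only [hxt, if_true] at hx
        have hmem : θ.h t⁻¹ x ∈ f.support := Finsupp.mem_support_iff.mpr hx
        refine Finset.mem_image.mpr ⟨θ.h t⁻¹ x, hmem, ?_⟩
        have := θ.h_left_inv t⁻¹ x (by simpa using hxt)
        simpa using this
      · simp [hxt] at hx)

/-- `I ⊆ F₀(X)` is `G`-invariant: `α t (I ∩ D t⁻¹) ⊆ I ∩ D t`. -/
def GInvariantF0 (θ : SetPartialAction G X) (K : Type*) [Field K]
    (I : Set (X →₀ K)) : Prop :=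
  ∀ t : G, ∀ f ∈ I, f ∈ F0 K (θ.Xt t⁻¹) →
    amap θ K t f ∈ I ∧ amap θ K t f ∈ F0 K (θ.Xt t)

end F0
theorem minimal_iff_GSimple
    {G : Type*} [Group G] {X : Type*} (θ : SetPartialAction G X)
    (K : Type*) [Field K] :
    θ.Minimal ↔ ∀ I : Set (X →₀ K), IsIdealF0 K I → GInvariantF0 θ K I →
      I = {0} ∨ I = Set.univ := by
  classical
  have hinv : ∀ t x, x ∈ θ.Xt t → θ.h t⁻¹ x ∈ θ.Xt t⁻¹ ∧ θ.h t (θ.h t⁻¹ x) = x := by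
    intro t x hx
    have h1 := θ.h_mem t⁻¹ x (by simpa using hx)
    have h2 := θ.h_left_inv t⁻¹ x (by simpa using hx)
    rw [inv_inv] at h2
    exact ⟨h1, h2⟩
  have hap : ∀ t f x, amap θ K t f x = if x ∈ θ.Xt t then f (θ.h t⁻¹ x) else 0 := by
    intro t f x
    simp [amap]
  constructor
  · intro hmin I ⟨h0, hadd, hneg, hmul⟩ hI
    have key : ∀ f ∈ I, ∀ x, f x ≠ 0 → ∀ c : K, Finsupp.single x c ∈ I := by
      intro f hf x hx c
      have := (hmul f hf (Finsupp.single x ((f x)⁻¹ * c))).1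
      have e : f * Finsupp.single x ((f x)⁻¹ * c) = Finsupp.single x c := by
        ext y
        by_cases hy : x = y
        · subst hy
          simp [hx]
        · simp [Finsupp.single_apply, hy]
      rwa [e] at this
    have hV : θ.Invariant {x | Finsupp.single x (1 : K) ∈ I} := by
      rintro t _ ⟨x, ⟨hx, hxt⟩, rfl⟩
      have h1 := (hI t _ hx (by
        intro y hy
        have : x ≠ y := by rintro rfl; exact hy hxt
        simp [Finsupp.single_apply, this])).1
      refine key _ h1 _ ?_ 1
      rw [hap, if_pos (θ.h_mem t x hxt), θ.h_left_inv t x hxt]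
      simp
    rcases hmin _ hV with h | h
    · left
      ext f
      constructor
      · intro hf
        ext x
        by_contra hx
        have : x ∈ {x | Finsupp.single x (1 : K) ∈ I} := key f hf x hx 1
        rw [h] at this
        exact this
      · rintro rfl
        exact h0
    · right
      ext f
      simp only [Set.mem_univ, iff_true]
      induction f using Finsupp.induction_linear with
      | zero => exact h0
      | add f g hf hg => exact hadd f hf g hg
      | single x c =>
        have : x ∈ {x | Finsupp.single x (1 : K) ∈ I} := by rw [h]; trivial
        exact key _ this x (by simp) c
  · intro hs V hV
    have hid : IsIdealF0 K (F0 K V) := by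
      refine ⟨fun x _ => rfl, fun f hf g hg x hx => ?_, fun f hf x hx => ?_,
        fun f hf g => ⟨fun x hx => ?_, fun x hx => ?_⟩⟩
      · simp [hf x hx, hg x hx]
      · simp [hf x hx]
      · simp [hf x hx]
      · simp [hf x hx]
    have hG : GInvariantF0 θ K (F0 K V) := by
      intro t f hf _
      refine ⟨fun x hx => ?_, fun x hx => ?_⟩
      · rw [hap]
        split_ifs with hxt
        · obtain ⟨h1, h2⟩ := hinv t x hxt
          apply hf
          intro h3
          exact hx (hV t ⟨_, ⟨h3, h1⟩, h2⟩)
        · rfl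
      · rw [hap, if_neg hx]
    rcases hs _ hid hG with h | h
    · left
      ext x
      simp only [Set.mem_empty_iff_false, iff_false]
      intro hx
      have : Finsupp.single x (1 : K) ∈ F0 K V := by
        intro y hy
        have : x ≠ y := by rintro rfl; exact hy hx
        simp [Finsupp.single_apply, this]
      rw [h] at this
      simp at this
    · right
      ext x
      simp only [Set.mem_univ, iff_true]
      by_contra hx
      have : Finsupp.single x (1 : K) ∈ F0 K V := by rw [h]; trivial
      have := this x hx
      simp at this
end

section
/- Let θ = ({X_t}_{t∈G}, {h_t}_{t∈G}) be a free partial action of an abelian group G on a set X, let K be a field, let α be the induced partial action of G on F₀(X), and let R = F₀(X) ⋆_α G be the partial skew group ring. Let A ⊆ X be a finite subset and e = χ_A ∈ F₀(X) its characteristic function. Then every element x of C_e satisfies P_g(x) = 0 for all g ≠ e_G; that is, C_e ⊆ F₀(A)δ_0 = eF₀(X)e·δ_0. -/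
section FSkew

variable {G : Type*} [Group G] {X : Type*}

/-- The ideal `D t = F₀(X_t)` of `F₀(X)`, as an additive subgroup. -/
def Dsub (θ : SetPartialAction G X) (K : Type*) [Field K] (t : G) :
    AddSubgroup (X →₀ K) where
  carrier := F0 K (θ.Xt t)
  zero_mem' := by intro x _; simp
  add_mem' := by intro f g hf hg x hx; simp [hf x hx, hg x hx]
  neg_mem' := by intro f hf x hx; simp [hf x hx]

variable (K : Type*) [Field K]

/-- The underlying additive group of the partial skew group ring `F₀(X) ⋆_α G`. -/
abbrev SkewF0 (θ : SetPartialAction G X) (K : Type*) [Field K] : Type _ :=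
  Π₀ t : G, ↥(Dsub θ K t)

/-- The element `f δ_t` for `f ∈ D t`. -/
noncomputable def deltaF [DecidableEq G] (θ : SetPartialAction G X) (t : G)
    (f : X →₀ K) (hf : f ∈ Dsub θ K t) : SkewF0 θ K :=
  DFinsupp.single t ⟨f, hf⟩

/-- The element `f δ_0` for arbitrary `f ∈ F₀(X) = D 1`. -/
noncomputable def deltaF0 [DecidableEq G] (θ : SetPartialAction G X) (f : X →₀ K) :
    SkewF0 θ K :=
  deltaF K θ 1 f (by intro x hx; rw [θ.Xt_one] at hx; exact absurd (Set.mem_univ x) hx)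

/-- The characteristic function `χ_A ∈ F₀(X)` of a finite set `A ⊆ X`. -/
noncomputable def chi (A : Finset X) : X →₀ K := Finsupp.indicator A fun _ _ => (1 : K)

/-- The multiplication of `F₀(X) ⋆_α G`, *assumed* to exist, to be biadditive,
associative and to satisfy `(f δ_t)(g δ_s) = α_t(α_{t⁻¹}(f) g) δ_{ts}`. -/
structure FSkewMul [DecidableEq G] (θ : SetPartialAction G X) (K : Type*) [Field K] where
  mul : SkewF0 θ K → SkewF0 θ K → SkewF0 θ K
  left_distrib : ∀ x y z, mul x (y + z) = mul x y + mul x z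
  right_distrib : ∀ x y z, mul (x + y) z = mul x z + mul y z
  mul_single : ∀ (t s : G) (a : X →₀ K) (ha : a ∈ Dsub θ K t)
      (b : X →₀ K) (hb : b ∈ Dsub θ K s) (g : G),
    ((mul (deltaF K θ t a ha) (deltaF K θ s b hb)) g : X →₀ K) =
      if g = t * s then amap θ K t (amap θ K t⁻¹ a * b) else 0
  assoc : ∀ x y z, mul (mul x y) z = mul x (mul y z)

variable [DecidableEq G] {θ : SetPartialAction G X}

/-- `J` is a two-sided ideal of the partial skew group ring `F₀(X) ⋆_α G`. -/
def IsSkewIdealF0 (S : FSkewMul θ K) (J : Set (SkewF0 θ K)) : Prop :=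
  (0 : SkewF0 θ K) ∈ J ∧ (∀ x ∈ J, ∀ y ∈ J, x + y ∈ J) ∧ (∀ x ∈ J, -x ∈ J) ∧
    (∀ x ∈ J, ∀ y : SkewF0 θ K, S.mul x y ∈ J ∧ S.mul y x ∈ J)

/-- The corner `x R x` of the partial skew group ring. -/
def cornerF (S : FSkewMul θ K) (x : SkewF0 θ K) : Set (SkewF0 θ K) :=
  {y | ∃ z, y = S.mul x (S.mul z x)}

/-- `C_e` for `e = χ_A`: the center of the corner `eδ_0 R eδ_0`. -/
def CeF (S : FSkewMul θ K) (A : Finset X) : Set (SkewF0 θ K) :=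
  {x ∈ cornerF K S (deltaF0 K θ (chi K A)) |
    ∀ y ∈ cornerF K S (deltaF0 K θ (chi K A)), S.mul x y = S.mul y x}

end FSkew
theorem amap_apply_aux {G : Type*} [Group G] {X : Type*} (θ : SetPartialAction G X)
    (K : Type*) [Field K] (t : G) (f : X →₀ K) (v : X) [Decidable (v ∈ θ.Xt t)] :
    amap θ K t f v = if v ∈ θ.Xt t then f (θ.h t⁻¹ v) else 0 := by
  simp only [amap, Finsupp.onFinset_apply]
  congr

theorem left_mul_aux {G : Type*} [Group G] [DecidableEq G] {X : Type*}
    {θ : SetPartialAction G X} (K : Type*) [Field K] (S : FSkewMul θ K)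
    (f : X →₀ K) (x : SkewF0 θ K) (g : G) (v : X) :
    (S.mul (deltaF0 K θ f) x g : X →₀ K) v = f v * (x g : X →₀ K) v := by
  classical
  induction x using DFinsupp.induction with
  | h0 =>
    have h := S.left_distrib (deltaF0 K θ f) 0 0
    rw [add_zero, left_eq_add] at h
    simp [h]
  | ha i b y _ _ ih =>
    obtain ⟨b, hb⟩ := b
    rw [S.left_distrib, DFinsupp.add_apply, DFinsupp.add_apply, AddSubgroup.coe_add,
      AddSubgroup.coe_add, Finsupp.add_apply, Finsupp.add_apply, ih, mul_add]
    congr 1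
    have h := S.mul_single 1 i f
      (by intro x hx; rw [θ.Xt_one] at hx; exact absurd (Set.mem_univ x) hx) b hb g
    change ((S.mul (deltaF0 K θ f) (DFinsupp.single i ⟨b, hb⟩)) g : X →₀ K) = _ at h
    rw [h]
    by_cases hg : g = i
    · subst hg
      simp [amap_apply_aux, θ.Xt_one, θ.h_one]
    · have hg' : ¬ (i = g) := fun h => hg h.symm
      simp [hg, DFinsupp.single_apply, hg']

theorem right_mul_aux {G : Type*} [Group G] [DecidableEq G] {X : Type*}
    {θ : SetPartialAction G X} (K : Type*) [Field K] (S : FSkewMul θ K)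
    (f : X →₀ K) (x : SkewF0 θ K) (g : G) (v : X) :
    (S.mul x (deltaF0 K θ f) g : X →₀ K) v = (x g : X →₀ K) v * f (θ.h g⁻¹ v) := by
  classical
  induction x using DFinsupp.induction with
  | h0 =>
    have h := S.right_distrib 0 0 (deltaF0 K θ f)
    rw [add_zero, left_eq_add] at h
    simp [h]
  | ha i b y _ _ ih =>
    obtain ⟨b, hb⟩ := b
    rw [S.right_distrib, DFinsupp.add_apply, DFinsupp.add_apply, AddSubgroup.coe_add,
      AddSubgroup.coe_add, Finsupp.add_apply, Finsupp.add_apply, ih, add_mul]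
    congr 1
    have h := S.mul_single i 1 b hb f
      (by intro x hx; rw [θ.Xt_one] at hx; exact absurd (Set.mem_univ x) hx) g
    change ((S.mul (DFinsupp.single i ⟨b, hb⟩) (deltaF0 K θ f)) g : X →₀ K) = _ at h
    rw [h]
    by_cases hg : g = i
    · subst hg
      by_cases hv : v ∈ θ.Xt g
      · have h1 : θ.h g⁻¹ v ∈ θ.Xt g⁻¹ := θ.h_mem g⁻¹ v (by simpa using hv)
        have h2 : θ.h g (θ.h g⁻¹ v) = v := by
          simpa using θ.h_left_inv g⁻¹ v (by simpa using hv)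
        simp [amap_apply_aux, hv, h1, h2]
      · have := hb v hv
        simp [amap_apply_aux, hv, this]
    · have hg' : ¬ (i = g) := fun h => hg h.symm
      simp [hg, DFinsupp.single_apply, hg']

theorem Ce_subset_F0A_delta0
    {G : Type*} [CommGroup G] [DecidableEq G] {X : Type*}
    (θ : SetPartialAction G X) (hfree : θ.Free)
    (K : Type*) [Field K] (S : FSkewMul θ K) (A : Finset X) :
    ∀ x ∈ CeF K S A,
      (∀ g : G, g ≠ 1 → ((x g : X →₀ K) = 0)) ∧
      (∀ v : X, v ∉ A → ((x (1 : G) : X →₀ K) v = 0)) := by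
  classical
  rintro x ⟨⟨z, hz⟩, hc⟩
  have hA : ∀ g : G, ∀ v : X, v ∉ A → (x g : X →₀ K) v = 0 := by
    intro g v hv
    rw [hz, left_mul_aux]
    simp [chi, Finsupp.indicator_apply, hv]
  refine ⟨?_, hA 1⟩
  intro g hg
  ext w
  by_cases hw : w ∈ A
  swap
  · simpa using hA g w hw
  by_cases hwg : w ∈ θ.Xt g
  swap
  · simpa using (x g).2 w hwg
  have hp : deltaF0 K θ (Finsupp.single w (1 : K)) ∈ cornerF K S (deltaF0 K θ (chi K A)) := by
    refine ⟨deltaF0 K θ (Finsupp.single w (1 : K)), ?_⟩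
    ext t v
    rw [left_mul_aux, left_mul_aux]
    by_cases ht : t = 1
    · subst ht
      by_cases hv : w = v
      · subst hv
        simp [deltaF0, deltaF, chi, Finsupp.indicator_apply, hw]
      · simp [deltaF0, deltaF, Finsupp.single_apply, hv]
    · have ht' : ¬ (1 = t) := fun h => ht h.symm
      simp [deltaF0, deltaF, DFinsupp.single_apply, ht']
  have h := congrArg (fun y : SkewF0 θ K => (y g : X →₀ K) w) (hc _ hp)
  simp only [left_mul_aux, right_mul_aux] at h
  have hne : ¬ (w = θ.h g⁻¹ w) := by
    intro he
    exact hg (by simpa using hfree g⁻¹ w (by simpa using hwg) he.symm)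
  simpa [Finsupp.single_apply, hne] using h.symm
end

section
/- Let θ = ({X_t}_{t∈G}, {h_t}_{t∈G}) be a free and minimal partial action of an abelian group G on a set X, let K be a field, let α be the induced partial action of G on F₀(X), and let R = F₀(X) ⋆_α G. Let A ⊆ X be a finite nonempty subset and e = χ_A. Then every nonzero element of C_e is of the form fδ_0 with f ∈ F₀(X) and supp(f) = A, and C_e is a field with identity eδ_0 (every nonzero element of C_e is invertible in C_e). -/
section Helpers

variable {G : Type*} [Group G] {X : Type*} {K : Type*} [Field K]

theorem aux_amap_apply (θ : SetPartialAction G X) (t : G) (f : X →₀ K) (p : X)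
    (hp : p ∈ θ.Xt t) : amap θ K t f p = f (θ.h t⁻¹ p) := by
  simp [amap, hp]

theorem aux_amap_apply_not (θ : SetPartialAction G X) (t : G) (f : X →₀ K) (p : X)
    (hp : p ∉ θ.Xt t) : amap θ K t f p = 0 := by
  simp [amap, hp]

variable [DecidableEq G] {θ : SetPartialAction G X}

theorem aux_ext {x y : SkewF0 θ K}
    (h : ∀ g p, (x g : X →₀ K) p = (y g : X →₀ K) p) : x = y := by
  ext g p
  exact h g p

theorem aux_add_apply (x y : SkewF0 θ K) (g : G) (p : X) :
    ((x + y) g : X →₀ K) p = (x g : X →₀ K) p + (y g : X →₀ K) p := by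
  simp

theorem aux_delta_apply (t : G) (f : X →₀ K) (hf : f ∈ Dsub θ K t) (g : G) (p : X) :
    ((deltaF K θ t f hf) g : X →₀ K) p = if g = t then f p else 0 := by
  by_cases h : g = t
  · subst h; simp [deltaF]
  · simp [deltaF, h, DFinsupp.single_eq_of_ne h]

theorem aux_delta0_apply (f : X →₀ K) (g : G) (p : X) :
    ((deltaF0 K θ f) g : X →₀ K) p = if g = 1 then f p else 0 :=
  aux_delta_apply (θ := θ) 1 f _ g p

theorem aux_mul_zero (S : FSkewMul θ K) (x : SkewF0 θ K) : S.mul x 0 = 0 := by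
  have := S.left_distrib x 0 0
  simpa using this

theorem aux_zero_mul (S : FSkewMul θ K) (x : SkewF0 θ K) : S.mul 0 x = 0 := by
  have := S.right_distrib 0 0 x
  simpa using this

theorem aux_L1 (S : FSkewMul θ K) (f : X →₀ K) (x : SkewF0 θ K) (g : G) (p : X) :
    ((S.mul (deltaF0 K θ f) x) g : X →₀ K) p = f p * (x g : X →₀ K) p := by
  induction x using DFinsupp.induction with
  | h0 => simp [aux_mul_zero]
  | ha t b y _ _ ih =>
    rw [S.left_distrib, aux_add_apply, aux_add_apply, ih, mul_add]
    congr 1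
    have h1 := S.mul_single 1 t f
      (by intro x hx; rw [θ.Xt_one] at hx; exact absurd (Set.mem_univ x) hx) b.1 b.2 g
    have h2 := aux_delta_apply (θ := θ) t b.1 b.2 g p
    have h3 := DFunLike.congr_fun h1 p
    refine h3.trans ?_
    have hu : ∀ q, q ∈ θ.Xt 1 := by intro q; rw [θ.Xt_one]; trivial
    refine Eq.trans ?_ (congrArg (f p * ·) h2).symm
    by_cases hg : g = t
    · simp only [hg, one_mul, if_true]
      rw [aux_amap_apply _ _ _ _ (hu p)]
      simp only [inv_one, θ.h_one, Finsupp.mul_apply]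
      rw [aux_amap_apply _ _ _ _ (hu p)]
      simp [θ.h_one]
    · simp [hg]

theorem aux_L2 (S : FSkewMul θ K) (f : X →₀ K) (x : SkewF0 θ K) (g : G) (p : X) :
    ((S.mul x (deltaF0 K θ f)) g : X →₀ K) p = (x g : X →₀ K) p * f (θ.h g⁻¹ p) := by
  induction x using DFinsupp.induction with
  | h0 => simp [aux_zero_mul]
  | ha t b y _ _ ih =>
    rw [S.right_distrib, aux_add_apply, aux_add_apply, ih, add_mul]
    congr 1
    have h1 := S.mul_single t 1 b.1 b.2 f
      (by intro x hx; rw [θ.Xt_one] at hx; exact absurd (Set.mem_univ x) hx) g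
    have h2 := aux_delta_apply (θ := θ) t b.1 b.2 g p
    have h3 := DFunLike.congr_fun h1 p
    refine h3.trans ?_
    refine Eq.trans ?_ (congrArg (· * f (θ.h g⁻¹ p)) h2).symm
    by_cases hg : g = t
    · subst hg
      simp only [mul_one, if_true]
      by_cases hp : p ∈ θ.Xt g
      · rw [aux_amap_apply _ _ _ _ hp]
        have hp' : p ∈ θ.Xt (g⁻¹)⁻¹ := by simpa using hp
        have hm := θ.h_mem g⁻¹ p hp'
        have hl := θ.h_left_inv g⁻¹ p hp'
        simp only [Finsupp.mul_apply]
        rw [aux_amap_apply _ _ _ _ hm, hl]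
      · rw [aux_amap_apply_not _ _ _ _ hp, b.2 p hp, zero_mul]
    · simp [hg]

theorem aux_vanish (x : SkewF0 θ K) (g : G) (p : X) (hp : p ∉ θ.Xt g) :
    (x g : X →₀ K) p = 0 := (x g).2 p hp

theorem aux_orbit (hmin : θ.Minimal) (q p : X) : ∃ t, q ∈ θ.Xt t⁻¹ ∧ θ.h t q = p := by
  have hV : θ.Invariant {p | ∃ t, q ∈ θ.Xt t⁻¹ ∧ θ.h t q = p} := by
    rintro s _ ⟨p, ⟨⟨t, hq, rfl⟩, hp⟩, rfl⟩
    have h1 : θ.h t q ∈ θ.h t '' (θ.Xt t⁻¹ ∩ θ.Xt (t⁻¹ * s⁻¹)) := by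
      rw [θ.h_image]
      exact ⟨θ.h_mem t q hq, by simpa using hp⟩
    obtain ⟨q', ⟨h2, h3⟩, h4⟩ := h1
    have h5 : q' = q := by
      rw [← θ.h_left_inv t q' h2, h4, θ.h_left_inv t q hq]
    subst h5
    exact ⟨s * t, by simpa using h3, (θ.h_comp s t q' h2 h3).symm⟩
  rcases hmin _ hV with h | h
  · exfalso
    have : q ∈ ({p | ∃ t, q ∈ θ.Xt t⁻¹ ∧ θ.h t q = p} : Set X) :=
      ⟨1, by simp [θ.Xt_one], θ.h_one q⟩
    rw [h] at this
    exact this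
  · have : p ∈ ({p | ∃ t, q ∈ θ.Xt t⁻¹ ∧ θ.h t q = p} : Set X) := by rw [h]; trivial
    exact this

open Classical in
theorem aux_chi (A : Finset X) (p : X) : chi K A p = if p ∈ A then 1 else 0 := by
  simp [chi, Finsupp.indicator_apply]

theorem aux_chi_mul (A : Finset X) (p : X) : chi K A p * chi K A p = chi K A p := by
  classical
  simp [aux_chi]

theorem aux_corner_iff (S : FSkewMul θ K) (A : Finset X) (x : SkewF0 θ K) :
    x ∈ cornerF K S (deltaF0 K θ (chi K A)) ↔
      ∀ g p, (x g : X →₀ K) p ≠ 0 → p ∈ A ∧ θ.h g⁻¹ p ∈ A := by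
  classical
  constructor
  · rintro ⟨z, rfl⟩ g p h
    rw [aux_L1, aux_L2, aux_chi, aux_chi] at h
    by_contra hc
    apply h
    by_cases h1 : p ∈ A <;> by_cases h2 : θ.h g⁻¹ p ∈ A <;> simp_all
  · intro h
    refine ⟨x, aux_ext fun g p => ?_⟩
    rw [aux_L1, aux_L2, aux_chi, aux_chi]
    by_cases h0 : (x g : X →₀ K) p = 0
    · simp [h0]
    · simp [h g p h0]

theorem aux_scalar_mem (S : FSkewMul θ K) (A : Finset X) (c : K) :
    deltaF0 K θ (c • chi K A) ∈ CeF K S A := by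
  classical
  refine ⟨(aux_corner_iff S A _).2 fun g p h => ?_, fun y hy => aux_ext fun g p => ?_⟩
  · rw [aux_delta0_apply] at h
    by_cases hg : g = 1
    · subst hg
      simp only [inv_one, θ.h_one, and_self]
      by_contra hp
      simp [aux_chi, hp] at h
    · simp [hg] at h
  · rw [aux_L1, aux_L2]
    rw [aux_corner_iff] at hy
    by_cases h0 : (y g : X →₀ K) p = 0
    · simp [h0]
    · simp [aux_chi, hy g p h0, mul_comm]

theorem aux_main (hfree : θ.Free) (hmin : θ.Minimal) (S : FSkewMul θ K) (A : Finset X)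
    (hA : A.Nonempty) (x : SkewF0 θ K) (hx : x ∈ CeF K S A) :
    ∃ c : K, x = deltaF0 K θ (c • chi K A) := by
  classical
  obtain ⟨hx1, hx2⟩ := hx
  have hx1' := (aux_corner_iff S A x).1 hx1
  have h1 : ∀ g p, (x g : X →₀ K) p ≠ 0 → g = 1 := by
    intro g p h
    have hpX : p ∈ θ.Xt g := by
      by_contra hc
      exact h (aux_vanish x g p hc)
    have hm : deltaF0 K θ (Finsupp.single p 1) ∈ cornerF K S (deltaF0 K θ (chi K A)) := by
      refine (aux_corner_iff S A _).2 fun g' p' h' => ?_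
      rw [aux_delta0_apply] at h'
      by_cases hg : g' = 1
      · subst hg
        simp only [if_true, Finsupp.single_apply] at h'
        have : p = p' := by by_contra hc; simp [hc] at h'
        subst this
        simp [θ.h_one, (hx1' g p h).1]
      · simp [hg] at h'
    have h2 := congrArg (fun z : SkewF0 θ K => (z g : X →₀ K) p) (hx2 _ hm)
    simp only [aux_L1, aux_L2, Finsupp.single_apply, if_true, one_mul] at h2
    have h3 : p = θ.h g⁻¹ p := by
      by_contra hc
      simp only [hc, if_false, mul_zero] at h2
      exact h h2.symm
    have := hfree g⁻¹ p (by simpa using hpX) h3.symm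
    simpa using this
  obtain ⟨q, hq⟩ := hA
  have hform : x = deltaF0 K θ (x 1 : X →₀ K) := by
    refine aux_ext fun g p => ?_
    rw [aux_delta0_apply]
    by_cases hg : g = 1
    · subst hg; simp
    · simp only [hg, if_false]
      by_contra hc
      exact hg (h1 g p hc)
  generalize (x 1 : X →₀ K) = f at hform
  subst hform
  refine ⟨f q, congrArg _ ?_⟩
  ext p
  rw [Finsupp.smul_apply, aux_chi]
  by_cases hp : p ∈ A
  · obtain ⟨t, ht, hqp⟩ := aux_orbit hmin q p
    have hpX : p ∈ θ.Xt t := hqp ▸ θ.h_mem t q ht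
    have hinv : θ.h t⁻¹ p = q := by rw [← hqp]; exact θ.h_left_inv t q ht
    have hd : Finsupp.single p (1 : K) ∈ Dsub θ K t := by
      intro y hy
      have : p ≠ y := by rintro rfl; exact hy hpX
      simp [Finsupp.single_apply, this]
    have hm : deltaF K θ t (Finsupp.single p 1) hd ∈ cornerF K S (deltaF0 K θ (chi K A)) := by
      refine (aux_corner_iff S A _).2 fun g' p' h' => ?_
      rw [aux_delta_apply] at h'
      by_cases hg : g' = t
      · subst hg
        simp only [if_true, Finsupp.single_apply] at h'
        have : p = p' := by by_contra hc; simp [hc] at h'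
        subst this
        rw [hinv]
        exact ⟨hp, hq⟩
      · simp [hg] at h'
    have h2 := congrArg (fun z : SkewF0 θ K => (z t : X →₀ K) p) (hx2 _ hm)
    simp only [aux_L1, aux_L2, aux_delta_apply, hinv] at h2
    simpa [hp] using h2
  · simp only [hp, if_false, smul_zero]
    by_contra hc
    have := hx1' 1 p (by rw [aux_delta0_apply]; simpa using hc)
    exact hp this.1

end Helpers

theorem Ce_is_field_of_free_minimal
    {G : Type*} [CommGroup G] [DecidableEq G] {X : Type*}
    (θ : SetPartialAction G X) (hfree : θ.Free) (hmin : θ.Minimal)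
    (K : Type*) [Field K] (S : FSkewMul θ K) (A : Finset X) (hA : A.Nonempty) :
    -- every nonzero element of `C_e` is of the form `f δ_0` with `supp f = A` …
    (∀ x ∈ CeF K S A, x ≠ 0 →
      (∀ g : G, g ≠ 1 → ((x g : X →₀ K) = 0)) ∧ ((x (1 : G) : X →₀ K).support = A)) ∧
    -- … and `C_e` is a field with identity `e δ_0`:
    (deltaF0 K θ (chi K A) ∈ CeF K S A) ∧
    (∀ x ∈ CeF K S A,
      S.mul (deltaF0 K θ (chi K A)) x = x ∧ S.mul x (deltaF0 K θ (chi K A)) = x) ∧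
    (∀ x ∈ CeF K S A, x ≠ 0 →
      ∃ y ∈ CeF K S A,
        S.mul x y = deltaF0 K θ (chi K A) ∧ S.mul y x = deltaF0 K θ (chi K A)) := by
  classical
  have hE : deltaF0 K θ (chi K A) = deltaF0 K θ ((1 : K) • chi K A) := by rw [one_smul]
  have hmul : ∀ c d : K, S.mul (deltaF0 K θ (c • chi K A)) (deltaF0 K θ (d • chi K A)) =
      deltaF0 K θ ((c * d) • chi K A) := by
    intro c d
    refine aux_ext fun g p => ?_
    rw [aux_L1, aux_delta0_apply, aux_delta0_apply]
    by_cases hg : g = 1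
    · by_cases hp : p ∈ A <;> simp [hg, aux_chi, hp]
    · simp [hg]
  have hne : ∀ c : K, deltaF0 K θ (c • chi K A) ≠ 0 → c ≠ 0 := by
    rintro c h rfl
    apply h
    refine aux_ext fun g p => ?_
    rw [aux_delta0_apply]
    simp
  refine ⟨?_, ?_, ?_, ?_⟩
  · intro x hx hx0
    obtain ⟨c, rfl⟩ := aux_main hfree hmin S A hA x hx
    have hc := hne c hx0
    constructor
    · intro g hg
      ext p
      rw [aux_delta0_apply]
      simp [hg]
    · ext p
      rw [Finsupp.mem_support_iff, aux_delta0_apply]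
      simp [aux_chi, hc]
  · rw [hE]; exact aux_scalar_mem S A 1
  · intro x hx
    obtain ⟨c, rfl⟩ := aux_main hfree hmin S A hA x hx
    rw [hE, hmul, hmul, one_mul, mul_one]
    exact ⟨rfl, rfl⟩
  · intro x hx hx0
    obtain ⟨c, rfl⟩ := aux_main hfree hmin S A hA x hx
    have hc := hne c hx0
    refine ⟨deltaF0 K θ (c⁻¹ • chi K A), aux_scalar_mem S A _, ?_, ?_⟩
    · rw [hmul, mul_inv_cancel₀ hc, hE]
    · rw [hmul, inv_mul_cancel₀ hc, hE]
end

section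
/- Let θ = ({X_t}_{t∈G}, {h_t}_{t∈G}) be a partial action of an abelian group G on a set X, let K be a field, let α be the induced partial action of G on F₀(X), and let R = F₀(X) ⋆_α G. If R is simple (its only two-sided ideals are {0} and R), then θ is free. -/
section Rep

variable {G : Type*} [Group G] [DecidableEq G] {X : Type*}

/-- The natural representation of the partial skew group ring on functions `X → K`. -/
noncomputable def repF (θ : SetPartialAction G X) (K : Type*) [Field K] :
    SkewF0 θ K →+ AddMonoid.End (X → K) :=
  DFinsupp.liftAddHom (fun s =>
    { toFun := fun a =>
        { toFun := fun f y => (a : X →₀ K) y * f (θ.h s⁻¹ y)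
          map_zero' := by funext y; simp
          map_add' := by intro f g; funext y; simp [mul_add] }
      map_zero' := by
        refine DFunLike.ext _ _ fun f => funext fun y => ?_
        exact zero_mul (f (θ.h s⁻¹ y))
      map_add' := by
        intro a b
        refine DFunLike.ext _ _ fun f => funext fun y => ?_
        exact add_mul ((a : X →₀ K) y) ((b : X →₀ K) y) (f (θ.h s⁻¹ y)) })

theorem repF_single (θ : SetPartialAction G X) (K : Type*) [Field K] (s : G)
    (a : Dsub θ K s) (f : X → K) (y : X) :
    repF θ K (DFinsupp.single s a) f y = (a : X →₀ K) y * f (θ.h s⁻¹ y) := by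
  unfold repF
  rw [DFinsupp.liftAddHom_apply_single]
  rfl

theorem mul_zeroF {θ : SetPartialAction G X} {K : Type*} [Field K] (S : FSkewMul θ K)
    (x : SkewF0 θ K) : S.mul x 0 = 0 := by
  have := S.left_distrib x 0 0
  simpa using this

theorem zero_mulF {θ : SetPartialAction G X} {K : Type*} [Field K] (S : FSkewMul θ K)
    (x : SkewF0 θ K) : S.mul 0 x = 0 := by
  have := S.right_distrib 0 0 x
  simpa using this

theorem repF_mul_single {θ : SetPartialAction G X} {K : Type*} [Field K] (S : FSkewMul θ K)
    (t s : G) (a : Dsub θ K t) (b : Dsub θ K s) :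
    repF θ K (S.mul (DFinsupp.single t a) (DFinsupp.single s b)) =
      repF θ K (DFinsupp.single t a) * repF θ K (DFinsupp.single s b) := by
  have key : ∀ g, ((S.mul (DFinsupp.single t a) (DFinsupp.single s b) g : Dsub θ K g) : X →₀ K) =
      if g = t * s then amap θ K t (amap θ K t⁻¹ a * b) else 0 :=
    S.mul_single t s a.1 a.2 b.1 b.2
  have hs : S.mul (DFinsupp.single t a) (DFinsupp.single s b) =
      DFinsupp.single (t * s) (S.mul (DFinsupp.single t a) (DFinsupp.single s b) (t * s)) := by
    refine DFinsupp.ext fun g => ?_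
    by_cases hg : g = t * s
    · subst hg; rw [DFinsupp.single_eq_same]
    · rw [DFinsupp.single_eq_of_ne hg]
      apply Subtype.ext
      rw [key g, if_neg hg]; rfl
  refine DFunLike.ext _ _ fun f => funext fun y => ?_
  rw [hs, repF_single, key, if_pos rfl]
  change _ = repF θ K (DFinsupp.single t a) (repF θ K (DFinsupp.single s b) f) y
  rw [repF_single, repF_single]
  by_cases hy : y ∈ θ.Xt t
  · have hz : θ.h t⁻¹ y ∈ θ.Xt t⁻¹ := θ.h_mem t⁻¹ y (by simpa using hy)
    have hyz : θ.h t (θ.h t⁻¹ y) = y := by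
      have := θ.h_left_inv t⁻¹ y (by simpa using hy)
      simpa using this
    by_cases hzs : θ.h t⁻¹ y ∈ θ.Xt s
    · have h1 : y ∈ θ.Xt t ∩ θ.Xt (t * s) := by
        rw [← θ.h_image]; exact ⟨_, ⟨hz, hzs⟩, hyz⟩
      have h2 := θ.h_comp s⁻¹ t⁻¹ y (by simpa using hy) (by simpa using h1.2)
      rw [h2]
      simp [amap, hy, hz, hyz, mul_assoc]
    · have hb : (b : X →₀ K) (θ.h t⁻¹ y) = 0 := b.2 _ hzs
      simp [amap, hb]
  · have ha : (a : X →₀ K) y = 0 := a.2 _ hy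
    simp [amap, hy, ha]

theorem repF_mul {θ : SetPartialAction G X} {K : Type*} [Field K] (S : FSkewMul θ K)
    (x y : SkewF0 θ K) : repF θ K (S.mul x y) = repF θ K x * repF θ K y := by
  induction x using DFinsupp.induction with
  | h0 => rw [zero_mulF, map_zero, zero_mul]
  | ha t a x _ _ ihx =>
    rw [S.right_distrib, map_add, map_add, add_mul, ihx]
    congr 1
    clear ihx
    induction y using DFinsupp.induction with
    | h0 => rw [mul_zeroF, map_zero, mul_zero]
    | ha s b y _ _ ihy =>
      rw [S.left_distrib, map_add, map_add, mul_add, ihy, repF_mul_single]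

end Rep

theorem free_of_simple
    {G : Type*} [CommGroup G] [DecidableEq G] {X : Type*}
    (θ : SetPartialAction G X)
    (K : Type*) [Field K] (S : FSkewMul θ K)
    (hsimple : ∀ J : Set (SkewF0 θ K), IsSkewIdealF0 K S J → J = {0} ∨ J = Set.univ) :
    θ.Free := by
  classical
  intro t x hx hfix
  by_contra ht
  have hxt : x ∈ θ.Xt t := by
    have := θ.h_mem t x hx
    rwa [hfix] at this
  have hinv : θ.h t⁻¹ x = x := by
    have := θ.h_left_inv t x hx
    rwa [hfix] at this
  let c : X →₀ K := Finsupp.single x 1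
  have hcmem : ∀ s, x ∈ θ.Xt s → c ∈ Dsub θ K s := by
    intro s hs y hy
    have : x ≠ y := fun h => hy (h ▸ hs)
    simp [c, Finsupp.single_apply, this]
  have h1 : x ∈ θ.Xt 1 := by rw [θ.Xt_one]; trivial
  let u : SkewF0 θ K := DFinsupp.single 1 ⟨c, hcmem 1 h1⟩
  let v : SkewF0 θ K := DFinsupp.single t ⟨c, hcmem t hxt⟩
  have hJ : IsSkewIdealF0 K S {r | repF θ K r = 0} := by
    refine ⟨map_zero _, ?_, ?_, ?_⟩
    · intro a ha b hb
      simp only [Set.mem_ofPred_eq] at *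
      rw [map_add, ha, hb, add_zero]
    · intro a ha
      simp only [Set.mem_ofPred_eq] at *
      rw [map_neg, ha, neg_zero]
    · intro a ha b
      simp only [Set.mem_ofPred_eq] at *
      rw [repF_mul, repF_mul, ha, zero_mul, mul_zero]
      exact ⟨rfl, rfl⟩
  have huv : repF θ K (u - v) = 0 := by
    rw [map_sub, sub_eq_zero]
    refine DFunLike.ext _ _ fun f => funext fun y => ?_
    rw [repF_single, repF_single]
    by_cases hy : x = y
    · subst hy; simp [hinv, θ.h_one]
    · simp [c, Finsupp.single_apply, hy]
  rcases hsimple _ hJ with h | h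
  · have h0 : u - v ∈ ({0} : Set (SkewF0 θ K)) := h ▸ huv
    have h2 : u = v := sub_eq_zero.mp h0
    have h3 : ((u 1 : Dsub θ K 1) : X →₀ K) x = ((v 1 : Dsub θ K 1) : X →₀ K) x := by rw [h2]
    have h4 : v 1 = 0 := DFinsupp.single_eq_of_ne (fun h => ht h.symm)
    have h5 : u 1 = ⟨c, hcmem 1 h1⟩ := DFinsupp.single_eq_same
    rw [h4, h5] at h3
    simp [c] at h3
  · have h0 : repF θ K u = 0 := by
      have : u ∈ {r | repF θ K r = 0} := h ▸ Set.mem_univ u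
      exact this
    have h2 : repF θ K u (fun _ => 1) x = 0 := by rw [h0]; rfl
    rw [repF_single] at h2
    simp [c] at h2
end

section
/- Let X be a compact Hausdorff topological space and θ = ({X_t}_{t∈G}, {h_t}_{t∈G}) a topological partial action of a group G on X such that each X_t is clopen, and let α be the induced partial action of G on the ring C(X) of continuous complex-valued functions on X. Then θ is minimal if and only if C(X) is G-simple, i.e., the only G-invariant ring ideals of C(X) are {0} and C(X). -/
/-- A topological partial action of `G` on a topological space `X` in which every
`Xt t` is clopen: the maps `h t : Xt t⁻¹ → Xt t` are homeomorphisms, i.e.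
continuous on their domains (continuity of the inverse `h t⁻¹` on `Xt t` is an
instance of the same field at `t⁻¹`). -/
structure TopPartialAction (G : Type*) [Group G] (X : Type*) [TopologicalSpace X]
    extends SetPartialAction G X where
  clopen : ∀ t, IsClopen (Xt t)
  h_cont : ∀ t, ContinuousOn (h t) (Xt t⁻¹)

namespace TopPartialAction

variable {G : Type*} [Group G] {X : Type*} [TopologicalSpace X]

/-- `θ` is minimal if `∅` and `X` are the only open `G`-invariant subsets of `X`. -/
def Minimal (θ : TopPartialAction G X) : Prop :=
  ∀ V : Set X, IsOpen V → θ.toSetPartialAction.Invariant V → V = ∅ ∨ V = Set.univ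

/-- `θ` is topologically free if for every `t ≠ 1` the set
`F_t = {x ∈ Xt t⁻¹ : h t x = x}` has empty interior. -/
def TopologicallyFree (θ : TopPartialAction G X) : Prop :=
  ∀ t : G, t ≠ 1 → interior {x ∈ θ.Xt t⁻¹ | θ.h t x = x} = ∅

/-- The ideal `D t = C(X_t) = {f ∈ C(X) : f = 0 off X_t}` of `C(X) = C(X, ℂ)`,
as an additive subgroup. -/
noncomputable def DC (θ : TopPartialAction G X) (t : G) : AddSubgroup C(X, ℂ) where
  carrier := {f : C(X, ℂ) | ∀ x ∉ θ.Xt t, f x = 0}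
  zero_mem' := by intro x _; simp
  add_mem' := by intro f g hf hg x hx; simp [hf x hx, hg x hx]
  neg_mem' := by intro f hf x hx; simp [hf x hx]

open Classical in
/-- The induced map `α t : C(X) → C(X)`, `α t f = f ∘ h t⁻¹` on `Xt t`, extended by
zero off `Xt t` (continuous since `Xt t` is clopen). -/
noncomputable def amapC (θ : TopPartialAction G X) (t : G) (f : C(X, ℂ)) : C(X, ℂ) :=
  ⟨fun x => if x ∈ θ.Xt t then f (θ.h t⁻¹ x) else 0, by
    rw [continuous_iff_continuousAt]
    intro x
    by_cases hx : x ∈ θ.Xt t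
    · have hopen : IsOpen (θ.Xt t) := (θ.clopen t).isOpen
      have hc : ContinuousOn (fun y => f (θ.h t⁻¹ y)) (θ.Xt t) := by
        apply f.continuous.comp_continuousOn
        have h1 := θ.h_cont t⁻¹
        rwa [inv_inv] at h1
      have hca := hc.continuousAt (hopen.mem_nhds hx)
      apply hca.congr
      filter_upwards [hopen.mem_nhds hx] with y hy
      simp [hy]
    · have hopen : IsOpen (θ.Xt t)ᶜ := (θ.clopen t).compl.isOpen
      have hca : ContinuousAt (fun _ : X => (0 : ℂ)) x := continuousAt_const
      apply hca.congr
      filter_upwards [hopen.mem_nhds hx] with y hy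
      simp only [Set.mem_compl_iff] at hy
      simp [hy]⟩

/-- An ideal `I ⊆ C(X)` is `G`-invariant: `α t (I ∩ D t⁻¹) ⊆ I ∩ D t`. -/
def GInvariantC (θ : TopPartialAction G X) (I : Ideal C(X, ℂ)) : Prop :=
  ∀ t : G, ∀ f ∈ I, f ∈ θ.DC t⁻¹ → θ.amapC t f ∈ I ∧ θ.amapC t f ∈ θ.DC t

/-- The underlying additive group of the partial skew group ring `C(X) ⋆_α G`. -/
abbrev SkewC (θ : TopPartialAction G X) : Type _ := Π₀ t : G, ↥(θ.DC t)

/-- The element `f δ_t` for `f ∈ D t`. -/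
noncomputable def deltaC [DecidableEq G] (θ : TopPartialAction G X) (t : G)
    (f : C(X, ℂ)) (hf : f ∈ θ.DC t) : θ.SkewC :=
  DFinsupp.single t ⟨f, hf⟩

/-- The element `f δ_0` for arbitrary `f ∈ C(X) = D 1`. -/
noncomputable def deltaC0 [DecidableEq G] (θ : TopPartialAction G X) (f : C(X, ℂ)) :
    θ.SkewC :=
  θ.deltaC 1 f (by intro x hx; rw [θ.Xt_one] at hx; exact absurd (Set.mem_univ x) hx)

end TopPartialAction

/-- The multiplication of `C(X) ⋆_α G`, *assumed* to exist, to be biadditive,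
associative and to satisfy `(f δ_t)(g δ_s) = α_t(α_{t⁻¹}(f) g) δ_{ts}`. -/
structure CSkewMul {G : Type*} [Group G] [DecidableEq G] {X : Type*}
    [TopologicalSpace X] (θ : TopPartialAction G X) where
  mul : θ.SkewC → θ.SkewC → θ.SkewC
  left_distrib : ∀ x y z, mul x (y + z) = mul x y + mul x z
  right_distrib : ∀ x y z, mul (x + y) z = mul x z + mul y z
  mul_single : ∀ (t s : G) (a : C(X, ℂ)) (ha : a ∈ θ.DC t)
      (b : C(X, ℂ)) (hb : b ∈ θ.DC s) (g : G),
    ((mul (θ.deltaC t a ha) (θ.deltaC s b hb)) g : C(X, ℂ)) =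
      if g = t * s then θ.amapC t (θ.amapC t⁻¹ a * b) else 0
  assoc : ∀ x y z, mul (mul x y) z = mul x (mul y z)

variable {G : Type*} [Group G] [DecidableEq G] {X : Type*} [TopologicalSpace X]
  {θ : TopPartialAction G X}

/-- `J` is a two-sided ideal of the partial skew group ring `C(X) ⋆_α G`. -/
def IsSkewIdealC (S : CSkewMul θ) (J : Set θ.SkewC) : Prop :=
  (0 : θ.SkewC) ∈ J ∧ (∀ x ∈ J, ∀ y ∈ J, x + y ∈ J) ∧ (∀ x ∈ J, -x ∈ J) ∧
    (∀ x ∈ J, ∀ y : θ.SkewC, S.mul x y ∈ J ∧ S.mul y x ∈ J)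

/-- The center of the partial skew group ring `C(X) ⋆_α G`. -/
def centerC (S : CSkewMul θ) : Set θ.SkewC :=
  {r | ∀ s : θ.SkewC, S.mul r s = S.mul s r}
theorem topMinimal_iff_GSimple
    {G : Type*} [Group G] {X : Type*} [TopologicalSpace X] [CompactSpace X] [T2Space X]
    (θ : TopPartialAction G X) :
    θ.Minimal ↔
      ∀ I : Ideal C(X, ℂ), θ.GInvariantC I → I = ⊥ ∨ I = ⊤ := by
  constructor
  · intro hmin I hI
    have hV := hmin (ContinuousMap.setOfIdeal I) (ContinuousMap.setOfIdeal_open I) (by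
      rintro t _ ⟨x, ⟨hxV, hxt⟩, rfl⟩
      rw [ContinuousMap.mem_setOfIdeal] at hxV ⊢
      obtain ⟨f, hf, hfx⟩ := hxV
      classical
      let e : C(X, ℂ) := ⟨fun y => if y ∈ θ.Xt t⁻¹ then 1 else 0,
        (IsLocallyConstant.iff_exists_open _ |>.2 (by
          intro y
          by_cases hy : y ∈ θ.Xt t⁻¹
          · refine ⟨_, (θ.clopen t⁻¹).isOpen, hy, ?_⟩
            intro z hz
            simp [hy, hz]
          · refine ⟨_, (θ.clopen t⁻¹).compl.isOpen, hy, ?_⟩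
            intro z hz
            rw [if_neg hy, if_neg hz])).continuous⟩
      refine ⟨θ.amapC t (e * f), (hI t (e * f) (I.mul_mem_left e hf) ?_).1, ?_⟩
      · intro y hy
        simp [e, hy]
      · have h1 := θ.h_mem t x hxt
        have h2 := θ.h_left_inv t x hxt
        simpa [TopPartialAction.amapC, h1, h2, e, hxt] using hfx)
    rcases hV with hV | hV
    · left
      rw [eq_bot_iff]
      intro f hf
      rw [Ideal.mem_bot]
      ext x
      by_contra hx
      have : x ∈ ContinuousMap.setOfIdeal I := ContinuousMap.mem_setOfIdeal.2 ⟨f, hf, hx⟩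
      rw [hV] at this
      exact this
    · right
      by_contra hne
      apply Ideal.closure_ne_top I hne
      rw [← ContinuousMap.idealOfSet_ofIdeal_eq_closure, hV, eq_top_iff]
      intro f _
      rw [ContinuousMap.mem_idealOfSet]
      intro x hx
      exact absurd (Set.mem_univ x) hx
  · intro h V hVo hV
    have key := h (ContinuousMap.idealOfSet ℂ V) (by
      intro t f hf _
      rw [ContinuousMap.mem_idealOfSet] at hf ⊢
      constructor
      · intro x hx
        by_cases hxt : x ∈ θ.Xt t
        · have hxt' : x ∈ θ.Xt (t⁻¹)⁻¹ := by rwa [inv_inv]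
          have h1 := θ.h_mem t⁻¹ x hxt'
          have h2 := θ.h_left_inv t⁻¹ x hxt'
          rw [inv_inv] at h2
          have h3 : θ.h t⁻¹ x ∉ V := fun hm => hx (hV t ⟨_, ⟨hm, h1⟩, h2⟩)
          simpa [TopPartialAction.amapC, hxt] using hf h3
        · simp [TopPartialAction.amapC, hxt]
      · intro x hx
        simp [TopPartialAction.amapC, hx])
    have hs := ContinuousMap.setOfIdeal_ofSet_of_isOpen ℂ hVo
    rcases key with k | k
    · left
      rw [← hs, k]
      ext x
      simp [ContinuousMap.mem_setOfIdeal]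
    · right
      rw [← hs, k]
      ext x
      simp only [ContinuousMap.mem_setOfIdeal, Set.mem_univ, iff_true]
      exact ⟨1, trivial, by simp⟩
end

section
/- Let G be an abelian group, X a compact Hausdorff topological space, and θ = ({X_t}_{t∈G}, {h_t}_{t∈G}) a topologically free topological partial action of G on X such that each X_t is clopen. Let α be the induced partial action of G on C(X) and R = C(X) ⋆_α G the partial skew group ring. Then every element of the center of R is supported in the identity coordinate; that is, if r ∈ R satisfies rs = sr for all s ∈ R, then P_g(r) = 0 for all g ≠ e_G, so the center of R is contained in C(X)δ_0. -/
variable {G : Type*} [Group G] [DecidableEq G] {X : Type*} [TopologicalSpace X]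
  {θ : TopPartialAction G X}

theorem aux_right {G' : Type*} [CommGroup G'] [DecidableEq G'] {Y : Type*} [TopologicalSpace Y]
    (θ' : TopPartialAction G' Y) (S : CSkewMul θ') (f : C(Y, ℂ)) (g : G') (x : Y)
    (hx : x ∈ θ'.Xt g) (r : θ'.SkewC) :
    (S.mul r (θ'.deltaC0 f) g : C(Y, ℂ)) x = (r g : C(Y, ℂ)) x * f (θ'.h g⁻¹ x) := by
  induction r using DFinsupp.induction with
  | h0 =>
    have h := S.right_distrib 0 0 (θ'.deltaC0 f)
    rw [add_zero] at h
    have h2 := left_eq_add.mp h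
    simp [h2]
  | ha t a r _ _ ih =>
    rw [S.right_distrib]
    have h := S.mul_single t 1 a.1 a.2 f
      (by intro x hx; rw [θ'.Xt_one] at hx; exact absurd (Set.mem_univ x) hx) g
    have h' : (S.mul (DFinsupp.single t a) (θ'.deltaC0 f) g : C(Y, ℂ)) = _ := h
    simp only [DFinsupp.add_apply, AddSubgroup.coe_add, ContinuousMap.add_apply, ih, add_mul, h']
    congr 1
    by_cases hgt : g = t
    · subst hgt
      have hm : θ'.h g⁻¹ x ∈ θ'.Xt g⁻¹ := θ'.h_mem g⁻¹ x (by rwa [inv_inv])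
      have hl := θ'.h_left_inv g⁻¹ x (by rwa [inv_inv])
      rw [inv_inv] at hl
      simp [TopPartialAction.amapC, hx, hm, hl]
    · have : (DFinsupp.single t a : θ'.SkewC) g = 0 := DFinsupp.single_eq_of_ne hgt
      simp [hgt, this]

theorem aux_left {G' : Type*} [CommGroup G'] [DecidableEq G'] {Y : Type*} [TopologicalSpace Y]
    (θ' : TopPartialAction G' Y) (S : CSkewMul θ') (f : C(Y, ℂ)) (g : G') (x : Y)
    (r : θ'.SkewC) :
    (S.mul (θ'.deltaC0 f) r g : C(Y, ℂ)) x = f x * (r g : C(Y, ℂ)) x := by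
  induction r using DFinsupp.induction with
  | h0 =>
    have h := S.left_distrib (θ'.deltaC0 f) 0 0
    rw [add_zero] at h
    have h2 := left_eq_add.mp h
    simp [h2]
  | ha t a r _ _ ih =>
    rw [S.left_distrib]
    have h := S.mul_single 1 t f
      (by intro x hx; rw [θ'.Xt_one] at hx; exact absurd (Set.mem_univ x) hx) a.1 a.2 g
    have h' : (S.mul (θ'.deltaC0 f) (DFinsupp.single t a) g : C(Y, ℂ)) = _ := h
    simp only [DFinsupp.add_apply, AddSubgroup.coe_add, ContinuousMap.add_apply, ih, mul_add, h']
    congr 1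
    by_cases hgt : g = t
    · subst hgt
      simp [TopPartialAction.amapC, θ'.Xt_one, θ'.h_one]
    · have : (DFinsupp.single t a : θ'.SkewC) g = 0 := DFinsupp.single_eq_of_ne hgt
      simp [hgt, this]

theorem center_supported_at_identity_of_topFree
    {G' : Type*} [CommGroup G'] [DecidableEq G'] {Y : Type*} [TopologicalSpace Y]
    [CompactSpace Y] [T2Space Y]
    (θ' : TopPartialAction G' Y) (hfree : θ'.TopologicallyFree) (S : CSkewMul θ') :
    ∀ r ∈ centerC S, ∀ g : G', g ≠ 1 → ((r g : C(Y, ℂ)) = 0) := by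
  intro r hr g hg
  by_contra hne
  obtain ⟨x₀, hx₀⟩ : ∃ x, (r g : C(Y, ℂ)) x ≠ 0 := by
    by_contra! hc
    exact hne (ContinuousMap.ext hc)
  have hE := hfree g⁻¹ (inv_ne_one.mpr hg)
  have hU : IsOpen {x | (r g : C(Y, ℂ)) x ≠ 0} :=
    isOpen_ne_fun (r g : C(Y, ℂ)).continuous continuous_const
  have hsub : {x | (r g : C(Y, ℂ)) x ≠ 0} ⊆ {x ∈ θ'.Xt g⁻¹⁻¹ | θ'.h g⁻¹ x = x} := by
    intro x hx
    have hxg : x ∈ θ'.Xt g := by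
      by_contra hn
      exact hx ((r g).2 x hn)
    refine ⟨by rwa [inv_inv], ?_⟩
    by_contra hxy
    obtain ⟨f, h0, h1, -⟩ := exists_continuous_zero_one_of_isClosed
      (isClosed_singleton (x := θ'.h g⁻¹ x)) (isClosed_singleton (x := x)) (by simpa using hxy)
    let F : C(Y, ℂ) := ⟨fun y => (f y : ℂ), by fun_prop⟩
    have e := hr (θ'.deltaC0 F)
    have e1 := aux_right θ' S F g x hxg r
    rw [e, aux_left] at e1
    have a0 : f (θ'.h g⁻¹ x) = 0 := h0 rfl
    have a1 : f x = 1 := h1 rfl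
    simp [F, a0, a1] at e1
    exact hx e1
  have := interior_maximal hsub hU hx₀
  rw [hE] at this
  exact this
end

section
/- Let G be an abelian group, X a compact Hausdorff topological space, and θ = ({X_t}_{t∈G}, {h_t}_{t∈G}) a topologically free and minimal topological partial action of G on X such that each X_t is clopen. Let α be the induced partial action of G on C(X) and R = C(X) ⋆_α G. Then the center of R equals ℂ·(1δ_0), the set of elements cδ_0 with c a constant function on X; in particular the center of R is a field. -/
variable {G : Type*} [Group G] [DecidableEq G] {X : Type*} [TopologicalSpace X]
  {θ : TopPartialAction G X}

theorem skew_key {G : Type*} [Group G] {X : Type*} [TopologicalSpace X]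
    (θ : TopPartialAction G X) (t : G) (a b : C(X, ℂ)) (ha : a ∈ θ.DC t) (x : X) :
    θ.amapC t (θ.amapC t⁻¹ a * b) x = a x * b (θ.h t⁻¹ x) := by
  classical
  by_cases hx : x ∈ θ.Xt t
  · have hx' : x ∈ θ.Xt t⁻¹⁻¹ := by rwa [inv_inv]
    have h1 := θ.h_mem t⁻¹ x hx'
    have h2 := θ.h_left_inv t⁻¹ x hx'
    simp [TopPartialAction.amapC] at h1 h2 ⊢
    simp [hx, h1, h2]
  · have h0 : a x = 0 := ha x hx
    simp [TopPartialAction.amapC, hx, h0]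

theorem skew_mulR {G : Type*} [Group G] [DecidableEq G] {X : Type*} [TopologicalSpace X]
    (θ : TopPartialAction G X) (S : CSkewMul θ) (f : C(X, ℂ)) (r : θ.SkewC) (t : G) (x : X) :
    (S.mul r (θ.deltaC0 f) t : C(X, ℂ)) x = (r t : C(X, ℂ)) x * f (θ.h t⁻¹ x) := by
  induction r using DFinsupp.induction with
  | h0 =>
    have h : S.mul 0 (θ.deltaC0 f) = 0 := by
      have := S.right_distrib 0 0 (θ.deltaC0 f)
      rw [add_zero] at this
      exact left_eq_add.mp this
    rw [h]; simp
  | ha i b r _ _ ih =>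
    have h1 : DFinsupp.single i b = θ.deltaC i b.1 b.2 := rfl
    have h2 := S.mul_single i 1 b.1 b.2 f
      (by intro x hx; rw [θ.Xt_one] at hx; exact absurd (Set.mem_univ x) hx) t
    have h3 : (S.mul (DFinsupp.single i b) (θ.deltaC0 f) t : C(X, ℂ)) x
        = ((DFinsupp.single i b : θ.SkewC) t : C(X, ℂ)) x * f (θ.h t⁻¹ x) := by
      rw [h1]
      unfold TopPartialAction.deltaC0
      rw [h2]
      by_cases hti : t = i
      · subst hti
        simp [skew_key θ t b.1 f b.2 x, TopPartialAction.deltaC]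
      · have : i ≠ t := fun h => hti h.symm
        simp [hti, TopPartialAction.deltaC, DFinsupp.single_eq_of_ne hti]
    rw [S.right_distrib, DFinsupp.add_apply, DFinsupp.add_apply]
    simp only [AddSubgroup.coe_add, ContinuousMap.add_apply]
    rw [ih, h3, add_mul]

theorem skew_mulL {G : Type*} [Group G] [DecidableEq G] {X : Type*} [TopologicalSpace X]
    (θ : TopPartialAction G X) (S : CSkewMul θ) (f : C(X, ℂ)) (r : θ.SkewC) (t : G) (x : X) :
    (S.mul (θ.deltaC0 f) r t : C(X, ℂ)) x = f x * (r t : C(X, ℂ)) x := by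
  have hf : f ∈ θ.DC 1 := by
    intro x hx; rw [θ.Xt_one] at hx; exact absurd (Set.mem_univ x) hx
  induction r using DFinsupp.induction with
  | h0 =>
    have h : S.mul (θ.deltaC0 f) 0 = 0 := by
      have := S.left_distrib (θ.deltaC0 f) 0 0
      rw [add_zero] at this
      exact left_eq_add.mp this
    rw [h]; simp
  | ha i b r _ _ ih =>
    have h1 : DFinsupp.single i b = θ.deltaC i b.1 b.2 := rfl
    have h2 := S.mul_single 1 i f hf b.1 b.2 t
    have h3 : (S.mul (θ.deltaC0 f) (DFinsupp.single i b) t : C(X, ℂ)) x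
        = f x * ((DFinsupp.single i b : θ.SkewC) t : C(X, ℂ)) x := by
      rw [h1]
      unfold TopPartialAction.deltaC0
      rw [h2]
      by_cases hti : t = i
      · subst hti
        rw [if_pos (one_mul t).symm, skew_key θ 1 f b.1 hf x]
        simp [TopPartialAction.deltaC, θ.h_one]
      · simp [hti, TopPartialAction.deltaC, DFinsupp.single_eq_of_ne hti]
    rw [S.left_distrib, DFinsupp.add_apply, DFinsupp.add_apply]
    simp only [AddSubgroup.coe_add, ContinuousMap.add_apply]
    rw [ih, h3, mul_add]

theorem skew_center {G : Type*} [Group G] [DecidableEq G] {X : Type*} [TopologicalSpace X]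
    [CompactSpace X] [T2Space X]
    (θ : TopPartialAction G X) (hfree : θ.TopologicallyFree) (hmin : θ.Minimal)
    (S : CSkewMul θ) :
    centerC S = {r : θ.SkewC | ∃ c : ℂ, r = θ.deltaC0 (ContinuousMap.const X c)} := by
  classical
  ext r
  constructor
  · intro hr
    have hz : ∀ t, t ≠ 1 → r t = 0 := by
      intro t ht
      have hsub : {x | (r t : C(X, ℂ)) x ≠ 0} ⊆ {x ∈ θ.Xt t⁻¹⁻¹ | θ.h t⁻¹ x = x} := by
        intro x hx
        have hx1 : x ∈ θ.Xt t := by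
          by_contra h
          exact hx ((r t).2 x h)
        refine ⟨by rwa [inv_inv], ?_⟩
        by_contra hne
        obtain ⟨f, hf0, hf1, -⟩ := exists_continuous_zero_one_of_isClosed
          (isClosed_singleton (x := θ.h t⁻¹ x)) (isClosed_singleton (x := x))
          (by simpa using hne)
        let F : C(X, ℂ) := ⟨fun y => (f y : ℂ), by fun_prop⟩
        have e := congrArg (fun q : θ.SkewC => (q t : C(X, ℂ)) x) (hr (θ.deltaC0 F))
        simp only [skew_mulL, skew_mulR] at e
        have e0 : f (θ.h t⁻¹ x) = 0 := hf0 rfl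
        have e1 : f x = 1 := hf1 rfl
        simp [F, e0, e1] at e
        exact hx e.symm
      have hopen : IsOpen {x | (r t : C(X, ℂ)) x ≠ 0} :=
        isOpen_ne_fun (r t : C(X, ℂ)).continuous continuous_const
      have hi := interior_maximal hsub hopen
      rw [hfree t⁻¹ (by simpa using ht)] at hi
      apply Subtype.ext
      ext x
      by_contra hx
      exact hi hx
    obtain ⟨f, hrf⟩ : ∃ f : C(X, ℂ), r = θ.deltaC0 f := by
      refine ⟨(r 1 : C(X, ℂ)), ?_⟩
      ext1 t
      by_cases ht : t = 1
      · subst ht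
        simp [TopPartialAction.deltaC0, TopPartialAction.deltaC]
      · rw [hz t ht]
        simp [TopPartialAction.deltaC0, TopPartialAction.deltaC, DFinsupp.single_eq_of_ne ht]
    have hinv : ∀ s, ∀ x ∈ θ.Xt s, f (θ.h s⁻¹ x) = f x := by
      intro s x hx
      have hm : θ.amapC s (ContinuousMap.const X 1) ∈ θ.DC s := by
        intro y hy
        simp [TopPartialAction.amapC, hy]
      have e := congrArg (fun q : θ.SkewC => (q s : C(X, ℂ)) x) (hr (θ.deltaC s _ hm))
      rw [hrf] at e
      simp only [skew_mulL, skew_mulR] at e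
      simp [TopPartialAction.deltaC, TopPartialAction.amapC, hx] at e
      exact e.symm
    rcases isEmpty_or_nonempty X with hX | ⟨⟨x0⟩⟩
    · refine ⟨0, ?_⟩
      rw [hrf]
      congr 1
      ext x
      exact hX.elim x
    · refine ⟨f x0, ?_⟩
      rw [hrf]
      congr 1
      have hV := hmin {x | f x ≠ f x0} (isOpen_ne_fun f.continuous continuous_const) (by
        rintro t _ ⟨x, ⟨hx, hxt⟩, rfl⟩
        have := hinv t⁻¹ x hxt
        rw [inv_inv] at this
        simpa [this] using hx)
      rcases hV with hV | hV
      · ext x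
        by_contra hx
        have : x ∈ {x | f x ≠ f x0} := hx
        rw [hV] at this
        exact this
      · have : x0 ∈ {x | f x ≠ f x0} := by rw [hV]; trivial
        exact absurd rfl this
  · rintro ⟨c, rfl⟩ s
    ext t x
    rw [skew_mulL, skew_mulR]
    simp [mul_comm]

theorem center_eq_constants_of_topFree_minimal
    {G' : Type*} [CommGroup G'] [DecidableEq G'] {Y : Type*} [TopologicalSpace Y]
    [CompactSpace Y] [T2Space Y]
    (θ' : TopPartialAction G' Y) (hfree : θ'.TopologicallyFree) (hmin : θ'.Minimal)
    (S : CSkewMul θ') :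
    centerC S = {r : θ'.SkewC | ∃ c : ℂ, r = θ'.deltaC0 (ContinuousMap.const Y c)} ∧
    -- in particular the center of `R` is a field:
    (∀ r ∈ centerC S, r ≠ 0 →
      ∃ s ∈ centerC S,
        S.mul r s = θ'.deltaC0 (ContinuousMap.const Y 1) ∧
        S.mul s r = θ'.deltaC0 (ContinuousMap.const Y 1)) := by
  have hc := skew_center θ' hfree hmin S
  refine ⟨hc, ?_⟩
  intro r hr hr0
  rw [hc] at hr
  obtain ⟨c, rfl⟩ := hr
  have hc0 : c ≠ 0 := by
    rintro rfl
    apply hr0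
    ext t x
    by_cases ht : t = 1
    · subst ht
      simp [TopPartialAction.deltaC0, TopPartialAction.deltaC]
    · simp [TopPartialAction.deltaC0, TopPartialAction.deltaC, DFinsupp.single_eq_of_ne ht]
  have hmul : ∀ a b : ℂ, a * b = 1 → S.mul (θ'.deltaC0 (ContinuousMap.const Y a))
      (θ'.deltaC0 (ContinuousMap.const Y b)) = θ'.deltaC0 (ContinuousMap.const Y 1) := by
    intro a b hab
    ext t x
    rw [skew_mulL]
    by_cases ht : t = 1
    · subst ht
      simp [TopPartialAction.deltaC0, TopPartialAction.deltaC, hab]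
    · simp [TopPartialAction.deltaC0, TopPartialAction.deltaC, DFinsupp.single_eq_of_ne ht]
  refine ⟨θ'.deltaC0 (ContinuousMap.const Y c⁻¹), by rw [hc]; exact ⟨_, rfl⟩, ?_, ?_⟩
  · exact hmul _ _ (mul_inv_cancel₀ hc0)
  · exact hmul _ _ (inv_mul_cancel₀ hc0)
end

section
/- Let G be an abelian group, X a compact Hausdorff topological space, and θ = ({X_t}_{t∈G}, {h_t}_{t∈G}) a topological partial action of G on X such that each X_t is clopen. Let α be the induced partial action of G on C(X) and R = C(X) ⋆_α G. If R is simple (its only two-sided ideals are {0} and R), then θ is topologically free. -/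
variable {G : Type*} [Group G] [DecidableEq G] {X : Type*} [TopologicalSpace X]
  {θ : TopPartialAction G X}

noncomputable def repS {G : Type*} [Group G] {X : Type*} [TopologicalSpace X]
    (θ : TopPartialAction G X) (s : G) : ↥(θ.DC s) →+ Module.End ℂ (X → ℂ) where
  toFun a :=
    { toFun := fun ξ x => (a : C(X, ℂ)) x * ξ (θ.h s⁻¹ x)

      map_add' := by intro u v; funext x; simp [mul_add]
      map_smul' := by intro c v; funext x; simp; ring }
  map_zero' := by apply LinearMap.ext; intro ξ; funext x; simp
  map_add' := by intro a b; apply LinearMap.ext; intro ξ; funext x; simp [add_mul]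

noncomputable def repC {G : Type*} [Group G] [DecidableEq G] {X : Type*} [TopologicalSpace X]
    (θ : TopPartialAction G X) : θ.SkewC →+ Module.End ℂ (X → ℂ) :=
  DFinsupp.liftAddHom (repS θ)

theorem repC_delta {G : Type*} [Group G] [DecidableEq G] {X : Type*} [TopologicalSpace X]
    (θ : TopPartialAction G X) (s : G) (a : C(X, ℂ)) (ha : a ∈ θ.DC s) (ξ : X → ℂ) (x : X) :
    repC θ (θ.deltaC s a ha) ξ x = a x * ξ (θ.h s⁻¹ x) := by
  simp [repC, TopPartialAction.deltaC, repS]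

theorem mul_delta {G : Type*} [Group G] [DecidableEq G] {X : Type*} [TopologicalSpace X]
    {θ : TopPartialAction G X} (S : CSkewMul θ) (t s : G) (a : C(X, ℂ)) (ha : a ∈ θ.DC t)
    (b : C(X, ℂ)) (hb : b ∈ θ.DC s) :
    ∃ hc : θ.amapC t (θ.amapC t⁻¹ a * b) ∈ θ.DC (t * s),
      S.mul (θ.deltaC t a ha) (θ.deltaC s b hb) = θ.deltaC (t * s) _ hc := by
  have h0 := S.mul_single t s a ha b hb
  have hc : θ.amapC t (θ.amapC t⁻¹ a * b) ∈ θ.DC (t * s) := by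
    have := h0 (t * s)
    rw [if_pos rfl] at this
    rw [← this]
    exact Subtype.property _
  refine ⟨hc, ?_⟩
  apply DFinsupp.ext
  intro g
  apply Subtype.ext
  rw [h0 g]
  by_cases hg : g = t * s
  · subst hg
    simp [TopPartialAction.deltaC]
  · rw [if_neg hg, TopPartialAction.deltaC, DFinsupp.single_eq_of_ne hg]
    rfl

theorem repC_mul_delta {G : Type*} [Group G] [DecidableEq G] {X : Type*} [TopologicalSpace X]
    {θ : TopPartialAction G X} (S : CSkewMul θ) (t s : G) (a : C(X, ℂ)) (ha : a ∈ θ.DC t)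
    (b : C(X, ℂ)) (hb : b ∈ θ.DC s) :
    repC θ (S.mul (θ.deltaC t a ha) (θ.deltaC s b hb)) =
      repC θ (θ.deltaC t a ha) * repC θ (θ.deltaC s b hb) := by
  obtain ⟨hc, h⟩ := mul_delta S t s a ha b hb
  rw [h]
  apply LinearMap.ext
  intro ξ
  funext x
  rw [Module.End.mul_apply, repC_delta, repC_delta, repC_delta]
  by_cases hx : x ∈ θ.Xt t
  · have hx' : x ∈ θ.Xt t⁻¹⁻¹ := by rwa [inv_inv]
    have h1 : θ.h t⁻¹ x ∈ θ.Xt t⁻¹ := θ.h_mem t⁻¹ x hx'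
    have h2 : θ.h t (θ.h t⁻¹ x) = x := by simpa using θ.h_left_inv t⁻¹ x hx'
    have hcx : θ.amapC t (θ.amapC t⁻¹ a * b) x = a x * b (θ.h t⁻¹ x) := by
      simp [TopPartialAction.amapC, hx, h1, h2]
    rw [hcx]
    by_cases hs : θ.h t⁻¹ x ∈ θ.Xt s
    · have h3 : x ∈ θ.Xt t ∩ θ.Xt (t * s) := by
        rw [← θ.h_image]
        exact ⟨_, ⟨h1, hs⟩, h2⟩
      have h4 := θ.h_comp s⁻¹ t⁻¹ x hx' (by simpa using h3.2)
      rw [h4, mul_inv_rev, mul_assoc]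
    · rw [hb _ hs]; simp
  · have hcx : θ.amapC t (θ.amapC t⁻¹ a * b) x = 0 := by
      simp [TopPartialAction.amapC, hx]
    rw [hcx, ha x hx]; simp

theorem repC_mul {G : Type*} [Group G] [DecidableEq G] {X : Type*} [TopologicalSpace X]
    {θ : TopPartialAction G X} (S : CSkewMul θ) (x y : θ.SkewC) :
    repC θ (S.mul x y) = repC θ x * repC θ y := by
  have hz1 : ∀ y, S.mul 0 y = 0 := fun y => by
    have := S.right_distrib 0 0 y
    rw [add_zero] at this
    exact left_eq_add.mp this
  have hz2 : ∀ y, S.mul y 0 = 0 := fun y => by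
    have := S.left_distrib y 0 0
    rw [add_zero] at this
    exact left_eq_add.mp this
  induction x using DFinsupp.induction with
  | h0 => rw [hz1, map_zero, zero_mul]
  | ha t a f _ _ ih =>
    rw [S.right_distrib, map_add, map_add, add_mul, ih]
    congr 1
    clear ih
    induction y using DFinsupp.induction with
    | h0 => rw [hz2, map_zero, mul_zero]
    | ha s b g _ _ ih =>
      rw [S.left_distrib, map_add, map_add, mul_add, ih]
      congr 1
      exact repC_mul_delta S t s a.1 a.2 b.1 b.2

theorem topFree_of_simple
    {G' : Type*} [CommGroup G'] [DecidableEq G'] {Y : Type*} [TopologicalSpace Y]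
    [CompactSpace Y] [T2Space Y]
    (θ' : TopPartialAction G' Y) (S : CSkewMul θ')
    (hsimple : ∀ J : Set θ'.SkewC, IsSkewIdealC S J → J = {0} ∨ J = Set.univ) :
    θ'.TopologicallyFree := by
  intro t ht
  by_contra hne
  obtain ⟨x₀, hx₀⟩ := Set.nonempty_iff_ne_empty.mpr hne
  set U := interior {x ∈ θ'.Xt t⁻¹ | θ'.h t x = x} with hU
  have hUo : IsOpen U := isOpen_interior
  have hUs : ∀ x ∈ U, x ∈ θ'.Xt t⁻¹ ∧ θ'.h t x = x := by
    intro x hx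
    have h := interior_subset hx
    exact h
  obtain ⟨f, hf0, hf1, -⟩ := exists_continuous_zero_one_of_isClosed (s := Uᶜ) (t := {x₀})
    hUo.isClosed_compl isClosed_singleton (by simpa using hx₀)
  let F : C(Y, ℂ) := ⟨fun x => (f x : ℂ), by fun_prop⟩
  have hF0 : ∀ x, x ∉ U → F x = 0 := fun x hx => by
    have : f x = 0 := hf0 hx
    simp [F, this]
  have hF1 : F x₀ = 1 := by
    have : f x₀ = 1 := hf1 rfl
    simp [F, this]
  have hFt : F ∈ θ'.DC t := by
    intro x hx
    apply hF0
    intro hxU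
    obtain ⟨h1, h2⟩ := hUs x hxU
    have := θ'.h_mem t x h1
    rw [h2] at this
    exact hx this
  have hD1 : ∀ g : C(Y, ℂ), g ∈ θ'.DC 1 := by
    intro g x hx
    rw [θ'.Xt_one] at hx
    exact absurd (Set.mem_univ x) hx
  have hJ : IsSkewIdealC S {r | repC θ' r = 0} := by
    refine ⟨map_zero _, ?_, ?_, ?_⟩
    · intro x hx y hy
      simp only [Set.mem_ofPred_eq] at *
      rw [map_add, hx, hy, add_zero]
    · intro x hx
      simp only [Set.mem_ofPred_eq] at *
      rw [map_neg, hx, neg_zero]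
    · intro x hx y
      simp only [Set.mem_ofPred_eq] at *
      rw [repC_mul, repC_mul, hx, zero_mul, mul_zero]
      exact ⟨rfl, rfl⟩
  rcases hsimple _ hJ with h | h
  · have hmem : θ'.deltaC 1 F (hD1 F) - θ'.deltaC t F hFt ∈ {r | repC θ' r = 0} := by
      simp only [Set.mem_ofPred_eq]
      rw [map_sub, sub_eq_zero]
      apply LinearMap.ext
      intro ξ
      funext x
      rw [repC_delta, repC_delta, inv_one, θ'.h_one]
      by_cases hx : x ∈ U
      · obtain ⟨h1, h2⟩ := hUs x hx
        have h3 := θ'.h_left_inv t x h1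
        rw [h2] at h3
        rw [h3]
      · rw [hF0 x hx]; simp
    rw [h, Set.mem_singleton_iff, sub_eq_zero] at hmem
    have h1 := congrArg (fun r : θ'.SkewC => (r 1 : C(Y, ℂ)) x₀) hmem
    simp only [TopPartialAction.deltaC] at h1
    rw [DFinsupp.single_eq_same, DFinsupp.single_eq_of_ne ht.symm] at h1
    simp [hF1] at h1
  · have hmem : θ'.deltaC 1 1 (hD1 1) ∈ {r | repC θ' r = 0} := by rw [h]; trivial
    have h1 : repC θ' (θ'.deltaC 1 1 (hD1 1)) (fun _ => 1) x₀ = 0 := by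
      rw [show repC θ' (θ'.deltaC 1 1 (hD1 1)) = 0 from hmem]; rfl
    rw [repC_delta] at h1
    simp at h1
end
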